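/- arXiv:2605.22746 — 3 statements merged into one kernel-verified Lean document; each statement's English description precedes it below -/
import Mathlib

section
/- Let Δ^{K−1} = {q ∈ ℝ^K : q_i ≥ 0 for all i, Σ_i q_i = 1} be the probability simplex, and let ℓ : Δ^{K−1} → ℝ be L-Lipschitz with respect to the Euclidean norm. Let α ∈ ℝ_{>0}^K, α₀ = Σ_{j=1}^K α_j, p = α/α₀, and let π be a Dirichlet(α)-distributed random vector. Then |𝔼[ℓ(π)] − ℓ(p)| ≤ L · √((1 − ‖p‖₂²)/(α₀ + 1)) ≤ L / √(α₀ + 1). -/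
open MeasureTheory ProbabilityTheory

/-- The probability simplex `Δ^{K−1} ⊆ ℝ^K`. -/
def probSimplex (K : ℕ) : Set (EuclideanSpace ℝ (Fin K)) :=
  {q | (∀ i, 0 ≤ q i) ∧ ∑ i, q i = 1}

lemma aux_gam {a : ℝ} (ha : 0 < a) (n : ℕ) {t : ℝ} (ht : 0 ≤ t) :
    ∫⁻ x, ENNReal.ofReal (x ^ n * Real.exp (-(t * x))) ∂(gammaMeasure a 1) =
      ENNReal.ofReal (Real.Gamma (a + n) / Real.Gamma a * (1 + t) ^ (-(a + n))) := by
  have han : 0 < a + n := by positivity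
  have h1t : 0 < 1 + t := by positivity
  have hG := Real.Gamma_pos_of_pos ha
  have hGn := Real.Gamma_pos_of_pos han
  have hm : Measurable (gammaPDF a 1) := (measurable_gammaPDFReal a 1).ennreal_ofReal
  have hm2 : Measurable (gammaPDF (a+n) (1+t)) := (measurable_gammaPDFReal _ _).ennreal_ofReal
  rw [gammaMeasure, lintegral_withDensity_eq_lintegral_mul _ hm (by fun_prop)]
  have key : ∀ᵐ x : ℝ, (gammaPDF a 1 * fun x => ENNReal.ofReal (x ^ n * Real.exp (-(t * x)))) x
      = ENNReal.ofReal (Real.Gamma (a + n) / Real.Gamma a * (1 + t) ^ (-(a + n)))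
        * gammaPDF (a + n) (1 + t) x := by
    have h0 : ∀ᵐ x : ℝ, x ≠ 0 := by simp [ae_iff]
    filter_upwards [h0] with x hx
    rcases lt_or_gt_of_ne hx with h | h
    · simp [gammaPDF_of_neg h]
    · simp only [Pi.mul_apply]
      rw [gammaPDF_of_nonneg h.le, gammaPDF_of_nonneg h.le, ← ENNReal.ofReal_mul (by positivity),
        ← ENNReal.ofReal_mul (by positivity)]
      congr 1
      rw [Real.rpow_neg h1t.le, show a + n - 1 = (a - 1) + n by ring, Real.rpow_add_natCast h.ne',
        show -((1 + t) * x) = -(1 * x) + -(t * x) by ring, Real.exp_add, Real.one_rpow]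
      have : (1 + t) ^ (a + n) ≠ 0 := (Real.rpow_pos_of_pos h1t _).ne'
      field_simp
  rw [lintegral_congr_ae key, lintegral_const_mul _ hm2, lintegral_gammaPDF_eq_one han h1t, mul_one]

lemma aux_inv {n : ℕ} (hn : 0 < n) {s : ℝ} (hs : 0 < s) :
    ∫⁻ t in Set.Ioi (0:ℝ), ENNReal.ofReal (t ^ ((n:ℝ) - 1) / Real.Gamma n) *
      ENNReal.ofReal (Real.exp (-(t * s))) = ENNReal.ofReal ((s ^ n)⁻¹) := by
  have hn' : (0:ℝ) < n := by exact_mod_cast hn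
  have hG := Real.Gamma_pos_of_pos hn'
  have hm2 : Measurable (gammaPDF n s) := (measurable_gammaPDFReal _ _).ennreal_ofReal
  have key : ∀ t ∈ Set.Ioi (0:ℝ), ENNReal.ofReal (t ^ ((n:ℝ) - 1) / Real.Gamma n) *
      ENNReal.ofReal (Real.exp (-(t * s))) = ENNReal.ofReal ((s ^ n)⁻¹) * gammaPDF n s t := by
    intro t (ht : 0 < t)
    rw [gammaPDF_of_nonneg ht.le, ← ENNReal.ofReal_mul (by positivity),
        ← ENNReal.ofReal_mul (by positivity), Real.rpow_natCast, mul_comm t s]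
    congr 1
    field_simp
  rw [setLIntegral_congr_fun measurableSet_Ioi key, lintegral_const_mul _ hm2]
  have : ∫⁻ t in Set.Ioi (0:ℝ), gammaPDF n s t = 1 := by
    have h := lintegral_add_compl (μ := volume) (gammaPDF n s) (measurableSet_Ici (a := (0:ℝ)))
    rw [Set.compl_Ici, lintegral_gammaPDF_of_nonpos le_rfl, add_zero,
      lintegral_gammaPDF_eq_one hn' hs] at h
    rw [setLIntegral_congr Ioi_ae_eq_Ici, h]
  rw [this, mul_one]

lemma aux_pos {a : ℝ} : ∀ᵐ x ∂(gammaMeasure a 1), 0 < x := by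
  have hm : Measurable (gammaPDF a 1) := (measurable_gammaPDFReal a 1).ennreal_ofReal
  rw [gammaMeasure, ae_withDensity_iff hm]
  have h0 : ∀ᵐ x : ℝ, x ≠ 0 := by simp [ae_iff]
  filter_upwards [h0] with x hx h
  by_contra hc
  exact h (gammaPDF_of_neg (lt_of_le_of_ne (not_lt.mp hc) hx))

lemma aux_moment {ι : Type*} [Fintype ι] [DecidableEq ι]
    {Ω : Type*} [MeasurableSpace Ω] (μ : Measure Ω) [IsProbabilityMeasure μ]
    (α : ι → ℝ) (hα : ∀ i, 0 < α i)
    (G : ι → Ω → ℝ) (hGmeas : ∀ i, Measurable (G i))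
    (hGindep : iIndepFun G μ)
    (hGlaw : ∀ i, μ.map (G i) = gammaMeasure (α i) 1) (i : ι) {n : ℕ} (hn : 0 < n) :
    ∫⁻ ω, ENNReal.ofReal ((G i ω / ∑ j, G j ω) ^ n) ∂μ =
      ENNReal.ofReal (Real.Gamma (α i + n) / Real.Gamma (α i)) *
      ∫⁻ t in Set.Ioi (0:ℝ), ENNReal.ofReal (t ^ ((n:ℝ) - 1) / Real.Gamma n) *
        ENNReal.ofReal ((1 + t) ^ (-((∑ j, α j) + n))) := by
  have hpos : ∀ᵐ ω ∂μ, ∀ j, 0 < G j ω := by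
    rw [ae_all_iff]
    intro j
    have := aux_pos (a := α j)
    rw [← hGlaw j] at this
    exact ae_of_ae_map (hGmeas j).aemeasurable this
  have step1 : ∀ᵐ ω ∂μ, ENNReal.ofReal ((G i ω / ∑ j, G j ω) ^ n) =
      ∫⁻ t in Set.Ioi (0:ℝ), ENNReal.ofReal (t ^ ((n:ℝ) - 1) / Real.Gamma n) *
        (ENNReal.ofReal (G i ω ^ n) * ENNReal.ofReal (Real.exp (-(t * ∑ j, G j ω)))) := by
    filter_upwards [hpos] with ω h
    have hS : 0 < ∑ j, G j ω := Finset.sum_pos (fun j _ => h j) ⟨i, Finset.mem_univ i⟩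
    have := h i
    rw [div_pow, div_eq_mul_inv, ENNReal.ofReal_mul (by positivity), ← aux_inv hn hS,
      ← lintegral_const_mul _ (by fun_prop)]
    congr 1; ext t; ring
  have step2 : ∀ t ∈ Set.Ioi (0:ℝ), ∫⁻ ω, (ENNReal.ofReal (G i ω ^ n) *
      ENNReal.ofReal (Real.exp (-(t * ∑ j, G j ω)))) ∂μ =
      ENNReal.ofReal (Real.Gamma (α i + n) / Real.Gamma (α i)) *
        ENNReal.ofReal ((1 + t) ^ (-((∑ j, α j) + n))) := by
    intro t (ht : 0 < t)
    let m : ι → ℕ := fun j => if j = i then n else 0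
    let g : ι → ℝ → ENNReal := fun j x => ENNReal.ofReal (x ^ (m j) * Real.exp (-(t * x)))
    have hg : ∀ j, Measurable (g j) := fun j => by fun_prop
    have e1 : ∀ᵐ ω ∂μ, ENNReal.ofReal (G i ω ^ n) *
      ENNReal.ofReal (Real.exp (-(t * ∑ j, G j ω))) = ∏ j, (g j ∘ G j) ω := by
      filter_upwards [hpos] with ω h
      have := h i
      simp only [Function.comp, g]
      rw [← ENNReal.ofReal_prod_of_nonneg (fun j _ => by have := h j; positivity),
        ← ENNReal.ofReal_mul (by positivity), Finset.prod_mul_distrib, ← Real.exp_sum]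
      congr 2
      · simp [m, pow_ite, Finset.prod_ite_eq']
      · rw [Finset.mul_sum, Finset.sum_neg_distrib]
    rw [lintegral_congr_ae e1, lintegral_prod_eq_prod_lintegral_of_indepFun _ _
      (hGindep.comp g hg) (fun j => (hg j).comp (hGmeas j))]
    have e2 : ∀ j, ∫⁻ ω, (g j ∘ G j) ω ∂μ = ENNReal.ofReal
        (Real.Gamma (α j + m j) / Real.Gamma (α j) * (1 + t) ^ (-(α j + m j))) := by
      intro j
      rw [← aux_gam (hα j) (m j) ht.le, ← hGlaw j, lintegral_map (hg j) (hGmeas j)]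
      rfl
    have hp : ∀ j, 0 < Real.Gamma (α j + m j) / Real.Gamma (α j) := fun j =>
      div_pos (Real.Gamma_pos_of_pos (by have := hα j; positivity)) (Real.Gamma_pos_of_pos (hα j))
    have hq := Real.Gamma_pos_of_pos (hα i)
    have hq' : 0 < Real.Gamma (α i + n) := Real.Gamma_pos_of_pos (by have := hα i; positivity)
    simp_rw [e2]
    rw [← ENNReal.ofReal_prod_of_nonneg (fun j _ => by have := hp j; positivity),
        ← ENNReal.ofReal_mul (by positivity), Finset.prod_mul_distrib]
    congr 2
    · rw [Finset.prod_eq_single i]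
      · simp [m]
      · intro j _ hj
        simp [m, hj, (Real.Gamma_pos_of_pos (hα j)).ne']
      · simp
    · rw [← Real.rpow_sum_of_pos (by positivity), Finset.sum_neg_distrib, Finset.sum_add_distrib]
      simp [m]
  rw [lintegral_congr_ae step1, lintegral_lintegral_swap, ← lintegral_const_mul _ (by fun_prop)]
  · refine setLIntegral_congr_fun measurableSet_Ioi fun t ht => ?_
    rw [lintegral_const_mul _ (by fun_prop), step2 t ht]
    ring
  · apply Measurable.aemeasurable
    have : Measurable (fun x : Ω × ℝ => ∑ j, G j x.1) :=
      Finset.measurable_sum _ fun j _ => (hGmeas j).comp measurable_fst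
    have h2 : Measurable (fun x : Ω × ℝ => G i x.1) := (hGmeas i).comp measurable_fst
    simp only [Function.uncurry_def]
    fun_prop

lemma aux_J {n : ℕ} (hn : 0 < n) {A : ℝ} (hA : 0 < A) :
    ∫⁻ t in Set.Ioi (0:ℝ), ENNReal.ofReal (t ^ ((n:ℝ) - 1) / Real.Gamma n) *
        ENNReal.ofReal ((1 + t) ^ (-(A + n))) =
      ENNReal.ofReal (Real.Gamma A / Real.Gamma (A + n)) := by
  have : IsProbabilityMeasure (gammaMeasure A 1) :=
    isProbabilityMeasure_gammaMeasure hA one_pos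
  have h := aux_moment (ι := Unit) (gammaMeasure A 1) (fun _ => A) (fun _ => hA) (fun _ x => x)
    (fun _ => measurable_id) (iIndepFun.of_subsingleton) (fun _ => Measure.map_id) () hn
  have hl : ∫⁻ ω, ENNReal.ofReal ((ω / ∑ j : Unit, ω) ^ n) ∂(gammaMeasure A 1) = 1 := by
    rw [lintegral_congr_ae (g := fun _ => 1)]
    · simp
    · filter_upwards [aux_pos (a := A)] with x hx
      simp [hx.ne']
  rw [hl] at h
  simp only [Finset.univ_unique, Finset.sum_const, Finset.card_singleton, one_smul] at h
  have h1 := Real.Gamma_pos_of_pos hA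
  have h2 : 0 < Real.Gamma (A + n) := Real.Gamma_pos_of_pos (by positivity)
  rw [← inv_div, ENNReal.ofReal_inv_of_pos (by positivity)]
  exact ENNReal.eq_inv_of_mul_eq_one_left (by rw [mul_comm]; exact h.symm)

lemma aux_mom {ι : Type*} [Fintype ι] [DecidableEq ι]
    {Ω : Type*} [MeasurableSpace Ω] (μ : Measure Ω) [IsProbabilityMeasure μ]
    (α : ι → ℝ) (hα : ∀ i, 0 < α i)
    (G : ι → Ω → ℝ) (hGmeas : ∀ i, Measurable (G i))
    (hGindep : iIndepFun G μ)
    (hGlaw : ∀ i, μ.map (G i) = gammaMeasure (α i) 1) (i : ι) {n : ℕ} (hn : 0 < n) :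
    ∫ ω, (G i ω / ∑ j, G j ω) ^ n ∂μ =
      Real.Gamma (α i + n) / Real.Gamma (α i) *
      (Real.Gamma (∑ j, α j) / Real.Gamma ((∑ j, α j) + n)) := by
  have hpos : ∀ᵐ ω ∂μ, ∀ j, 0 < G j ω := by
    rw [ae_all_iff]
    intro j
    have := aux_pos (a := α j)
    rw [← hGlaw j] at this
    exact ae_of_ae_map (hGmeas j).aemeasurable this
  have hA : 0 < ∑ j, α j := Finset.sum_pos (fun j _ => hα j) ⟨i, Finset.mem_univ i⟩
  have hq := Real.Gamma_pos_of_pos (hα i)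
  have hq' : 0 < Real.Gamma (α i + n) := Real.Gamma_pos_of_pos (by have := hα i; positivity)
  have h1 := Real.Gamma_pos_of_pos hA
  have h2 : 0 < Real.Gamma ((∑ j, α j) + n) := Real.Gamma_pos_of_pos (by positivity)
  rw [integral_eq_lintegral_of_nonneg_ae, aux_moment μ α hα G hGmeas hGindep hGlaw i hn,
    aux_J hn hA, ← ENNReal.ofReal_mul (by positivity), ENNReal.toReal_ofReal (by positivity)]
  · filter_upwards [hpos] with ω h
    have hS : 0 < ∑ j, G j ω := Finset.sum_pos (fun j _ => h j) ⟨i, Finset.mem_univ i⟩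
    have := h i
    simp only [Pi.zero_apply]
    positivity
  · exact (((hGmeas i).div (Finset.measurable_sum _ fun j _ => hGmeas j)).pow_const n).aestronglyMeasurable

/-- **Lipschitz plug-in approximation.**
Let `ℓ` be `L`-Lipschitz on the probability simplex (w.r.t. the Euclidean
norm), let `π` be a Dirichlet(α)-distributed random vector, realized as
`π_i = G_i / (G_1 + ⋯ + G_K)` with `G_i` independent Gamma(α_i, 1), and let
`p = α/α₀`.  Then
`|𝔼[ℓ(π)] − ℓ(p)| ≤ L √((1 − ‖p‖₂²)/(α₀+1)) ≤ L/√(α₀+1)`. -/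
theorem lipschitz_plugin_approximation {K : ℕ} (hK : 0 < K)
    {Ω : Type*} [MeasurableSpace Ω] (μ : Measure Ω) [IsProbabilityMeasure μ]
    (ℓ : EuclideanSpace ℝ (Fin K) → ℝ) (L : ℝ) (hL : 0 ≤ L)
    (hlip : ∀ u ∈ probSimplex K, ∀ v ∈ probSimplex K, |ℓ u - ℓ v| ≤ L * ‖u - v‖)
    (α : Fin K → ℝ) (hα : ∀ i, 0 < α i)
    (G : Fin K → Ω → ℝ) (hGmeas : ∀ i, Measurable (G i))
    (hGindep : iIndepFun G μ)
    (hGlaw : ∀ i, μ.map (G i) = gammaMeasure (α i) 1)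
    (π : Ω → EuclideanSpace ℝ (Fin K))
    (hπ : ∀ ω i, π ω i = G i ω / ∑ j, G j ω)
    (α₀ : ℝ) (hα₀ : α₀ = ∑ j, α j)
    (p : EuclideanSpace ℝ (Fin K)) (hp : ∀ i, p i = α i / α₀) :
    |(∫ ω, ℓ (π ω) ∂μ) - ℓ p| ≤ L * Real.sqrt ((1 - ‖p‖ ^ 2) / (α₀ + 1)) ∧
      L * Real.sqrt ((1 - ‖p‖ ^ 2) / (α₀ + 1)) ≤ L / Real.sqrt (α₀ + 1) := by
  subst hα₀
  set A := ∑ j, α j with hAdef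
  have : Nonempty (Fin K) := ⟨⟨0, hK⟩⟩
  have hA : 0 < A := Finset.sum_pos (fun j _ => hα j) Finset.univ_nonempty
  have hpos : ∀ᵐ ω ∂μ, ∀ j, 0 < G j ω := by
    rw [ae_all_iff]
    intro j
    have := aux_pos (a := α j)
    rw [← hGlaw j] at this
    exact ae_of_ae_map (hGmeas j).aemeasurable this
  have hps : p ∈ probSimplex K := by
    refine ⟨fun i => ?_, ?_⟩
    · rw [hp]; exact (div_pos (hα i) hA).le
    · simp_rw [hp]; rw [← Finset.sum_div]; exact div_self hA.ne'
  have hπs : ∀ᵐ ω ∂μ, π ω ∈ probSimplex K := by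
    filter_upwards [hpos] with ω h
    have hS : 0 < ∑ j, G j ω := Finset.sum_pos (fun j _ => h j) Finset.univ_nonempty
    refine ⟨fun i => ?_, ?_⟩
    · rw [hπ]; exact (div_pos (h i) hS).le
    · simp_rw [hπ]; rw [← Finset.sum_div]; exact div_self hS.ne'
  have hπm : ∀ i, Measurable (fun ω => π ω i) := fun i => by
    simp_rw [hπ]
    exact (hGmeas i).div (Finset.measurable_sum _ fun j _ => hGmeas j)
  have hπmeas : Measurable π := by
    have h1 : Measurable (fun ω => (WithLp.toLp 2 (fun i => π ω i) : EuclideanSpace ℝ (Fin K))) :=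
      (WithLp.measurable_toLp 2 _).comp (measurable_pi_lambda _ hπm)
    exact h1
  have hle1 : ∀ q ∈ probSimplex K, ∀ i, q i ≤ 1 := fun q hq i => by
    rw [← hq.2]; exact Finset.single_le_sum (fun j _ => hq.1 j) (Finset.mem_univ i)
  have hnsq : ∀ q : EuclideanSpace ℝ (Fin K), ‖q‖ ^ 2 = ∑ i, q i ^ 2 := fun q => by
    rw [EuclideanSpace.norm_sq_eq]; simp
  have hbd : ∀ q ∈ probSimplex K, ‖q‖ ≤ 1 := fun q hq => by
    have : ‖q‖ ^ 2 ≤ 1 := by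
      rw [hnsq, ← hq.2]
      refine Finset.sum_le_sum fun i _ => ?_
      have := hle1 q hq i
      have := hq.1 i
      nlinarith
    nlinarith [norm_nonneg q]
  -- moments
  have hm1 : ∀ i, ∫ ω, π ω i ∂μ = p i := fun i => by
    have h := aux_mom μ α hα G hGmeas hGindep hGlaw i (n := 1) one_pos
    have h1 := (Real.Gamma_pos_of_pos (hα i)).ne'
    have h2 := (Real.Gamma_pos_of_pos hA).ne'
    rw [← hAdef] at h
    simp only [pow_one, Nat.cast_one, Real.Gamma_add_one (hα i).ne', Real.Gamma_add_one hA.ne'] at h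
    simp_rw [hπ, hp]
    rw [h]
    field_simp
  have hm2 : ∀ i, ∫ ω, (π ω i) ^ 2 ∂μ = α i * (α i + 1) / (A * (A + 1)) := fun i => by
    have h := aux_mom μ α hα G hGmeas hGindep hGlaw i (n := 2) two_pos
    have h1 := (Real.Gamma_pos_of_pos (hα i)).ne'
    have h2 := (Real.Gamma_pos_of_pos hA).ne'
    have h3 : 0 < α i + 1 := by have := hα i; positivity
    rw [← hAdef] at h
    have e : ∀ x : ℝ, 0 < x → Real.Gamma (x + (2:ℕ)) = (x + 1) * (x * Real.Gamma x) := by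
      intro x hx
      rw [← Real.Gamma_add_one hx.ne', ← Real.Gamma_add_one (by positivity)]
      congr 1; push_cast; ring
    rw [e _ (hα i), e _ hA] at h
    simp_rw [hπ]
    rw [h]
    field_simp
  have hi1 : ∀ i, Integrable (fun ω => π ω i) μ := fun i => by
    refine Integrable.of_bound (hπm i).aestronglyMeasurable 1 ?_
    filter_upwards [hπs] with ω h
    rw [Real.norm_eq_abs, abs_of_nonneg (h.1 i)]
    exact hle1 _ h i
  have hi2 : ∀ i, Integrable (fun ω => (π ω i) ^ 2) μ := fun i => by
    refine Integrable.of_bound ((hπm i).pow_const 2).aestronglyMeasurable 1 ?_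
    filter_upwards [hπs] with ω h
    rw [Real.norm_eq_abs, abs_of_nonneg (sq_nonneg _)]
    exact pow_le_one₀ (h.1 i) (hle1 _ h i)
  have hsq : ∫ ω, ‖π ω - p‖ ^ 2 ∂μ = (1 - ‖p‖ ^ 2) / (A + 1) := by
    have e : ∀ ω, ‖π ω - p‖ ^ 2 = ∑ i, ((π ω i) ^ 2 - 2 * p i * π ω i + p i ^ 2) := fun ω => by
      rw [hnsq]
      refine Finset.sum_congr rfl fun i _ => ?_
      simp only [PiLp.sub_apply]; ring
    simp_rw [e]
    have hI : ∀ i ∈ Finset.univ, Integrable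
        (fun ω => (π ω i) ^ 2 - 2 * p i * π ω i + p i ^ 2) μ := fun i _ =>
      ((hi2 i).sub ((hi1 i).const_mul _)).add (integrable_const _)
    rw [integral_finsetSum _ hI]
    have e2 : ∀ i, ∫ ω, ((π ω i) ^ 2 - 2 * p i * π ω i + p i ^ 2) ∂μ =
        (A / (A + 1)) * p i ^ 2 + (1 / (A + 1)) * p i - p i ^ 2 := fun i => by
      have hI1 : Integrable (fun ω => (π ω i) ^ 2 - 2 * p i * π ω i) μ :=
        (hi2 i).sub ((hi1 i).const_mul _)
      rw [integral_add hI1 (integrable_const _),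
        integral_sub (hi2 i) ((hi1 i).const_mul _), integral_const_mul, hm1, hm2]
      simp only [integral_const, probReal_univ, one_smul]
      rw [hp]
      field_simp
      ring
    simp_rw [e2]
    rw [Finset.sum_sub_distrib, Finset.sum_add_distrib, ← Finset.mul_sum, ← Finset.mul_sum,
      ← hnsq, hps.2]
    field_simp
    ring
  have hXm : Measurable (fun ω => ‖π ω - p‖) := (hπmeas.sub_const p).norm
  have hXb : ∀ᵐ ω ∂μ, ‖‖π ω - p‖‖ ≤ 2 := by
    filter_upwards [hπs] with ω h
    rw [norm_norm]
    have := norm_sub_le (π ω) p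
    have := hbd _ h
    have := hbd _ hps
    linarith
  have hX2 : MemLp (fun ω => ‖π ω - p‖) 2 μ := MemLp.of_bound hXm.aestronglyMeasurable 2 hXb
  have hX1 : Integrable (fun ω => ‖π ω - p‖) μ := hX2.integrable (by norm_num)
  have hJ : ∫ ω, ‖π ω - p‖ ∂μ ≤ Real.sqrt ((1 - ‖p‖ ^ 2) / (A + 1)) := by
    apply Real.le_sqrt_of_sq_le
    rw [← hsq]
    have h := variance_nonneg (fun ω => ‖π ω - p‖) μ
    rw [variance_eq_sub hX2] at h
    simp only [Pi.pow_apply] at h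
    linarith
  have hℓ : AEStronglyMeasurable (fun ω => ℓ (π ω)) μ := by
    have hl : LipschitzOnWith ⟨L, hL⟩ ℓ (probSimplex K) :=
      LipschitzOnWith.of_dist_le_mul fun u hu v hv => by
        rw [Real.dist_eq, dist_eq_norm]; exact hlip u hu v hv
    obtain ⟨g, hg, hEq⟩ := hl.extend_real
    refine AEStronglyMeasurable.congr
      (hg.continuous.measurable.comp hπmeas).aestronglyMeasurable ?_
    filter_upwards [hπs] with ω h
    exact (hEq h).symm
  have hdiff : ∀ᵐ ω ∂μ, ‖ℓ (π ω) - ℓ p‖ ≤ L * ‖π ω - p‖ := by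
    filter_upwards [hπs] with ω h
    exact hlip _ h _ hps
  have hdi : Integrable (fun ω => ℓ (π ω) - ℓ p) μ :=
    (hX1.const_mul L).mono' (hℓ.sub aestronglyMeasurable_const) hdiff
  have hℓi : Integrable (fun ω => ℓ (π ω)) μ := by
    have := hdi.add (integrable_const (ℓ p))
    refine this.congr (ae_of_all _ fun ω => ?_)
    simp
  refine ⟨?_, ?_⟩
  · have e : (∫ ω, ℓ (π ω) ∂μ) - ℓ p = ∫ ω, (ℓ (π ω) - ℓ p) ∂μ := by
      rw [integral_sub hℓi (integrable_const _)]; simp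
    rw [e, ← Real.norm_eq_abs]
    calc _ ≤ ∫ ω, L * ‖π ω - p‖ ∂μ := norm_integral_le_of_norm_le (hX1.const_mul L) hdiff
      _ = L * ∫ ω, ‖π ω - p‖ ∂μ := integral_const_mul _ _
      _ ≤ _ := mul_le_mul_of_nonneg_left hJ hL
  · rw [div_eq_mul_inv L, ← Real.sqrt_inv]
    refine mul_le_mul_of_nonneg_left (Real.sqrt_le_sqrt ?_) hL
    rw [div_eq_mul_inv]
    have : 0 ≤ (A + 1)⁻¹ := by positivity
    nlinarith [sq_nonneg ‖p‖]
end

section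
/- Let Δ^{K−1} be the probability simplex in ℝ^K, and let ℓ : ℝ^K → ℝ be twice continuously differentiable on an open convex neighborhood U of Δ^{K−1}, with Hessian H_ℓ satisfying the Lipschitz condition ‖H_ℓ(u) − H_ℓ(v)‖_op ≤ G‖u − v‖₂ for all u, v ∈ U, for some G ≥ 0. Let α ∈ ℝ_{>0}^K, α₀ = Σ_{j=1}^K α_j, p = α/α₀, let π be a Dirichlet(α)-distributed random vector, and define L₁(p) = (1/2) tr(H_ℓ(p)(Diag(p) − p pᵀ)). Then the remainder R(α) := 𝔼[ℓ(π)] − ℓ(p) − L₁(p)/(α₀ + 1) satisfies |R(α)| ≤ (G/3) · (1 − ‖p‖₂²)/(α₀ + 1) ≤ G/(3(α₀ + 1)). -/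
open MeasureTheory ProbabilityTheory
open scoped RealInnerProductSpace

lemma aux_meas_gammaPDF (a r : ℝ) : Measurable (gammaPDF a r) :=
  (measurable_gammaPDFReal a r).ennreal_ofReal

lemma aux_gamma_1d (a t : ℝ) (ha : 0 < a) (ht : 0 < t) (m : ℕ) :
    ∫⁻ x, ENNReal.ofReal (x ^ m * Real.exp (-(t * x))) ∂(gammaMeasure a 1)
      = ENNReal.ofReal (Real.Gamma (a + m) / Real.Gamma a * (1 + t) ^ (-(a + m))) := by
  have hGa := Real.Gamma_pos_of_pos ha
  have ham : 0 < a + m := by positivity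
  have hGm := Real.Gamma_pos_of_pos ham
  have ht1 : 0 < 1 + t := by linarith
  rw [gammaMeasure, lintegral_withDensity_eq_lintegral_mul _
    (aux_meas_gammaPDF a 1) (by fun_prop)]
  have key : ∀ᵐ x ∂(volume : Measure ℝ),
      (gammaPDF a 1 * fun x : ℝ => ENNReal.ofReal (x ^ m * Real.exp (-(t * x)))) x
      = ENNReal.ofReal (Real.Gamma (a + m) / Real.Gamma a * (1 + t) ^ (-(a + m)))
        * gammaPDF (a + m) (1 + t) x := by
    have h0 : ∀ᵐ x ∂(volume : Measure ℝ), x ≠ 0 := by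
      simp [ae_iff, measure_singleton]
    filter_upwards [h0] with x hx
    rcases lt_or_gt_of_ne hx with h | h
    · simp [gammaPDF_of_neg h]
    · rw [Pi.mul_apply, gammaPDF_of_nonneg h.le, gammaPDF_of_nonneg h.le,
        ← ENNReal.ofReal_mul (by positivity), ← ENNReal.ofReal_mul (by positivity)]
      congr 1
      have e1 : x ^ (a + m - 1) = x ^ (a - 1) * x ^ m := by
        rw [← Real.rpow_natCast, ← Real.rpow_add h]; ring_nf
      have e2 : Real.exp (-((1 + t) * x)) = Real.exp (-(1 * x)) * Real.exp (-(t * x)) := by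
        rw [← Real.exp_add]; ring_nf
      rw [e1, e2, Real.rpow_neg ht1.le, Real.one_rpow]
      have := (Real.rpow_pos_of_pos ht1 (a + m)).ne'
      field_simp
  rw [lintegral_congr_ae key, lintegral_const_mul _ (aux_meas_gammaPDF _ _),
    lintegral_gammaPDF_eq_one ham ht1, mul_one]

lemma aux_inv_sq (S : ℝ) (hS : 0 < S) :
    ∫⁻ t in Set.Ioi (0:ℝ), ENNReal.ofReal (t * Real.exp (-(S * t))) = ENNReal.ofReal (1 / S ^ 2) := by
  have h : ∀ t : ℝ, (Set.Ioi (0:ℝ)).indicator (fun t => ENNReal.ofReal (t * Real.exp (-(S * t)))) t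
      = ENNReal.ofReal (1 / S ^ 2) * gammaPDF 2 S t := by
    intro t
    rcases le_or_gt t 0 with h | h
    · rw [Set.indicator_of_notMem (by simpa using h)]
      rcases h.lt_or_eq with h | h
      · simp [gammaPDF_of_neg h]
      · subst h; rw [gammaPDF_of_nonneg le_rfl]; norm_num
    · rw [Set.indicator_of_mem (by simpa using h), gammaPDF_of_nonneg h.le,
        ← ENNReal.ofReal_mul (by positivity)]
      congr 1
      have : (2:ℝ) - 1 = 1 := by norm_num
      rw [this, Real.rpow_one, Real.Gamma_two, Real.rpow_two]
      field_simp
  rw [← lintegral_indicator measurableSet_Ioi]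
  simp_rw [h]
  rw [lintegral_const_mul _ (aux_meas_gammaPDF _ _),
    lintegral_gammaPDF_eq_one (by norm_num) hS, mul_one]

lemma aux_beta (a : ℝ) (ha : 0 < a) :
    ∫⁻ t in Set.Ioi (0:ℝ), ENNReal.ofReal (t * (1 + t) ^ (-(a + 2)))
      = ENNReal.ofReal (1 / (a * (a + 1))) := by
  have hd : ∀ x ∈ Set.Ici (0:ℝ), HasDerivAt
      (fun t : ℝ => (1 + t) ^ (-(a + 1)) / (a + 1) - (1 + t) ^ (-a) / a) (x * (1 + x) ^ (-(a + 2))) x := by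
    intro x hx
    have hx1 : 0 < 1 + x := by have : 0 ≤ x := hx; linarith
    have h1 : HasDerivAt (fun t : ℝ => 1 + t) 1 x := (hasDerivAt_id x).const_add 1
    have := ((h1.rpow_const (p := -(a + 1)) (Or.inl hx1.ne')).div_const (a + 1)).sub
      ((h1.rpow_const (p := -a) (Or.inl hx1.ne')).div_const a)
    refine HasDerivAt.congr_deriv this ?_
    have e1 : (1 + x) ^ (-a - 1) = (1 + x) ^ (-(a + 2)) * (1 + x) := by
      nth_rewrite 3 [← Real.rpow_one (1 + x)]
      rw [← Real.rpow_add hx1]; ring_nf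
    have e2 : (1 + x) ^ (-(a + 1) - 1) = (1 + x) ^ (-(a + 2)) := by ring_nf
    rw [e1, e2]
    field_simp
    ring
  have hT : ∀ b : ℝ, 0 < b → Filter.Tendsto (fun t : ℝ => (1 + t) ^ (-b) / b) Filter.atTop (nhds 0) := by
    intro b hb
    have := ((tendsto_rpow_neg_atTop hb).comp (Filter.tendsto_atTop_add_const_left Filter.atTop (1:ℝ) Filter.tendsto_id)).div_const b
    simpa using this
  have ht := (hT (a + 1) (by linarith)).sub (hT a ha)
  have hpos : ∀ x ∈ Set.Ioi (0:ℝ), 0 ≤ x * (1 + x) ^ (-(a + 2)) := by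
    intro x hx
    have : 0 < x := hx
    positivity
  have hint := integrableOn_Ioi_deriv_of_nonneg' hd hpos ht
  have hval := integral_Ioi_of_hasDerivAt_of_nonneg' hd hpos ht
  rw [← ofReal_integral_eq_lintegral_ofReal hint
    ((ae_restrict_iff' measurableSet_Ioi).2 (ae_of_all _ hpos)), hval]
  congr 1
  simp
  field_simp
  ring

lemma aux_taylor {E : Type*} [NormedAddCommGroup E] [InnerProductSpace ℝ E] [CompleteSpace E]
    (U : Set E) (hU : Convex ℝ U) (ℓ : E → ℝ) (grad : E → E) (Hess : E → E →L[ℝ] E)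
    (hgrad : ∀ x ∈ U, HasGradientAt ℓ (grad x) x)
    (hhess : ∀ x ∈ U, HasFDerivAt grad (Hess x) x)
    (G : ℝ) (hlip : ∀ u ∈ U, ∀ v ∈ U, ‖Hess u - Hess v‖ ≤ G * ‖u - v‖)
    (p q : E) (hp : p ∈ U) (hq : q ∈ U) :
    |ℓ q - (ℓ p + ⟪grad p, q - p⟫ + 1 / 2 * ⟪Hess p (q - p), q - p⟫)| ≤ G / 6 * ‖q - p‖ ^ 3 := by
  set d := q - p with hd
  have hmem : ∀ t ∈ Set.Icc (0:ℝ) 1, p + t • d ∈ U := by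
    intro t ht
    have := hU.add_smul_sub_mem hp hq ht
    simpa using this
  have hline : ∀ t : ℝ, HasDerivAt (fun t : ℝ => p + t • d) d t := by
    intro t
    simpa using ((hasDerivAt_id t).smul_const d).const_add p
  have h1 : ∀ t ∈ Set.Icc (0:ℝ) 1, HasDerivAt (fun t : ℝ => ℓ (p + t • d)) ⟪grad (p + t • d), d⟫ t := by
    intro t ht
    have := (hgrad _ (hmem t ht)).hasFDerivAt.comp_hasDerivAt t (hline t)
    exact this.congr_deriv (by simp)
  have h2 : ∀ t ∈ Set.Icc (0:ℝ) 1, HasDerivAt (fun t : ℝ => ⟪grad (p + t • d), d⟫)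
      ⟪Hess (p + t • d) d, d⟫ t := by
    intro t ht
    have := ((hhess _ (hmem t ht)).comp_hasDerivAt t (hline t)).inner ℝ (hasDerivAt_const t d)
    simpa using this
  have b2 : ∀ t ∈ Set.Icc (0:ℝ) 1,
      ‖⟪Hess (p + t • d) d, d⟫ - ⟪Hess p d, d⟫‖ ≤ G * ‖d‖ ^ 3 * t := by
    intro t ht
    rw [← inner_sub_left, ← sub_apply]
    have h3 := hlip _ (hmem t ht) p hp
    rw [add_sub_cancel_left, norm_smul, Real.norm_of_nonneg ht.1] at h3
    calc _ ≤ ‖(Hess (p + t • d) - Hess p) d‖ * ‖d‖ := norm_inner_le_norm _ _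
      _ ≤ (‖Hess (p + t • d) - Hess p‖ * ‖d‖) * ‖d‖ := by
          gcongr; exact ContinuousLinearMap.le_opNorm _ _
      _ ≤ (G * (t * ‖d‖) * ‖d‖) * ‖d‖ := by gcongr
      _ = _ := by ring
  have b1 : ∀ t ∈ Set.Icc (0:ℝ) 1,
      ‖⟪grad (p + t • d), d⟫ - ⟪grad p, d⟫ - t * ⟪Hess p d, d⟫‖ ≤ G * ‖d‖ ^ 3 * t ^ 2 / 2 := by
    have hder : ∀ t ∈ Set.Icc (0:ℝ) 1, HasDerivAt
        (fun t : ℝ => ⟪grad (p + t • d), d⟫ - ⟪grad p, d⟫ - t * ⟪Hess p d, d⟫)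
        (⟪Hess (p + t • d) d, d⟫ - ⟪Hess p d, d⟫) t := by
      intro t ht
      exact (((h2 t ht).sub_const ⟪grad p, d⟫).sub
        ((hasDerivAt_id t).mul_const ⟪Hess p d, d⟫)).congr_deriv (by simp)
    intro t ht
    refine image_norm_le_of_norm_deriv_right_le_deriv_boundary
      (fun t ht => (hder t ht).continuousAt.continuousWithinAt)
      (fun t ht => (hder t ⟨ht.1, ht.2.le⟩).hasDerivWithinAt)
      (B := fun t => G * ‖d‖ ^ 3 * t ^ 2 / 2) (B' := fun t => G * ‖d‖ ^ 3 * t)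
      (by simp) ?_ (fun t ht => b2 t ⟨ht.1, ht.2.le⟩) ht
    intro x
    exact (((hasDerivAt_pow 2 x).const_mul (G * ‖d‖ ^ 3)).div_const 2).congr_deriv (by simp; ring)
  have b0 : ∀ t ∈ Set.Icc (0:ℝ) 1,
      ‖ℓ (p + t • d) - ℓ p - t * ⟪grad p, d⟫ - t ^ 2 / 2 * ⟪Hess p d, d⟫‖
        ≤ G * ‖d‖ ^ 3 * t ^ 3 / 6 := by
    have hder : ∀ t ∈ Set.Icc (0:ℝ) 1, HasDerivAt
        (fun t : ℝ => ℓ (p + t • d) - ℓ p - t * ⟪grad p, d⟫ - t ^ 2 / 2 * ⟪Hess p d, d⟫)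
        (⟪grad (p + t • d), d⟫ - ⟪grad p, d⟫ - t * ⟪Hess p d, d⟫) t := by
      intro t ht
      have := (((h1 t ht).sub_const (ℓ p)).sub ((hasDerivAt_id t).mul_const ⟪grad p, d⟫)).sub
        (((hasDerivAt_pow 2 t).div_const 2).mul_const ⟪Hess p d, d⟫)
      exact this.congr_deriv (by simp)
    intro t ht
    refine image_norm_le_of_norm_deriv_right_le_deriv_boundary
      (fun t ht => (hder t ht).continuousAt.continuousWithinAt)
      (fun t ht => (hder t ⟨ht.1, ht.2.le⟩).hasDerivWithinAt)
      (B := fun t => G * ‖d‖ ^ 3 * t ^ 3 / 6) (B' := fun t => G * ‖d‖ ^ 3 * t ^ 2 / 2)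
      (by simp) ?_ (fun t ht => b1 t ⟨ht.1, ht.2.le⟩) ht
    intro x
    exact (((hasDerivAt_pow 3 x).const_mul (G * ‖d‖ ^ 3)).div_const 6).congr_deriv (by simp; ring)
  have := b0 1 ⟨zero_le_one, le_rfl⟩
  rw [Real.norm_eq_abs] at this
  have e : p + (1:ℝ) • d = q := by simp [hd]
  rw [e] at this
  convert this using 1
  · congr 1; ring
  · ring

lemma aux_pos_s15 {Ω : Type*} [MeasurableSpace Ω] (μ : Measure Ω) (a : ℝ) (W : Ω → ℝ)
    (hW : Measurable W) (hlaw : μ.map W = gammaMeasure a 1) : ∀ᵐ ω ∂μ, 0 < W ω := by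
  have h : ∀ᵐ x ∂(μ.map W), 0 < x := by
    rw [hlaw, gammaMeasure, ae_withDensity_iff (aux_meas_gammaPDF a 1)]
    have h0 : ∀ᵐ x ∂(volume : Measure ℝ), x ≠ 0 := by
      simp [ae_iff, measure_singleton]
    filter_upwards [h0] with x hx hne
    by_contra hcon
    exact hne (gammaPDF_of_neg (lt_of_le_of_ne (not_lt.1 hcon) hx))
  exact ae_of_ae_map hW.aemeasurable h

lemma aux_joint {K : ℕ} {Ω : Type*} [MeasurableSpace Ω] (μ : Measure Ω) [IsProbabilityMeasure μ]
    (α : Fin K → ℝ) (hα : ∀ i, 0 < α i)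
    (W : Fin K → Ω → ℝ) (hWmeas : ∀ i, Measurable (W i))
    (hWindep : iIndepFun W μ)
    (hWlaw : ∀ i, μ.map (W i) = gammaMeasure (α i) 1) (i j : Fin K) (t : ℝ) (ht : 0 < t) :
    ∫⁻ ω, ENNReal.ofReal (W i ω * W j ω * Real.exp (-((∑ k, W k ω) * t))) ∂μ
      = ENNReal.ofReal ((α i * α j + if i = j then α i else 0)
          * (1 + t) ^ (-((∑ k, α k) + 2))) := by
  have ht1 : 0 < 1 + t := by linarith
  set m : Fin K → ℕ := fun k => (if k = i then 1 else 0) + (if k = j then 1 else 0) with hm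
  have hall : ∀ᵐ ω ∂μ, ∀ k, 0 < W k ω :=
    ae_all_iff.2 fun k => aux_pos_s15 μ (α k) (W k) (hWmeas k) (hWlaw k)
  have hprod : ∀ᵐ ω ∂μ, ENNReal.ofReal (W i ω * W j ω * Real.exp (-((∑ k, W k ω) * t)))
      = ∏ k, ENNReal.ofReal (W k ω ^ m k * Real.exp (-(t * W k ω))) := by
    filter_upwards [hall] with ω hω
    rw [← ENNReal.ofReal_prod_of_nonneg
      (fun k _ => mul_nonneg (pow_nonneg (hω k).le _) (Real.exp_pos _).le)]
    congr 1
    rw [Finset.prod_mul_distrib, ← Real.exp_sum]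
    congr 1
    · simp only [hm, pow_add, Finset.prod_mul_distrib]
      simp [pow_ite, Finset.prod_ite_eq']
    · congr 1
      rw [Finset.sum_neg_distrib, ← Finset.mul_sum, mul_comm]
  rw [lintegral_congr_ae hprod]
  have hind : iIndepFun (fun k ω => ENNReal.ofReal (W k ω ^ m k * Real.exp (-(t * W k ω)))) μ :=
    hWindep.comp (fun k x => ENNReal.ofReal (x ^ m k * Real.exp (-(t * x))))
      (fun k => by fun_prop)
  rw [lintegral_prod_eq_prod_lintegral_of_indepFun Finset.univ _ hind
    (fun k => by have := hWmeas k; fun_prop)]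
  have h1 : ∀ k, ∫⁻ ω, ENNReal.ofReal (W k ω ^ m k * Real.exp (-(t * W k ω))) ∂μ
      = ENNReal.ofReal (Real.Gamma (α k + m k) / Real.Gamma (α k) * (1 + t) ^ (-(α k + m k))) := by
    intro k
    rw [← aux_gamma_1d (α k) t (hα k) ht (m k), ← hWlaw k, lintegral_map (by fun_prop) (hWmeas k)]
  simp_rw [h1]
  have hG : ∀ k, 0 < Real.Gamma (α k + m k) / Real.Gamma (α k) := fun k => by
    have h2 : 0 < α k := hα k
    have h3 : 0 < α k + m k := by positivity
    exact div_pos (Real.Gamma_pos_of_pos h3) (Real.Gamma_pos_of_pos h2)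
  rw [← ENNReal.ofReal_prod_of_nonneg
      (fun k _ => mul_nonneg (hG k).le (Real.rpow_nonneg ht1.le _))]
  congr 1
  rw [Finset.prod_mul_distrib]
  congr 1
  · by_cases hij : i = j
    · subst hij
      have : ∀ k, Real.Gamma (α k + m k) / Real.Gamma (α k)
          = if k = i then α k * (α k + 1) else 1 := by
        intro k
        have h2 := (hα k)
        have h3 := (Real.Gamma_pos_of_pos h2).ne'
        by_cases hk : k = i
        · simp only [hm, hk, if_true]
          rw [hk] at h2 h3
          have : α i + ((1 + 1 : ℕ) : ℝ) = α i + 1 + 1 := by push_cast; ring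
          rw [this, Real.Gamma_add_one (by positivity), Real.Gamma_add_one h2.ne']
          field_simp
        · simp [hm, hk, h3]
      simp_rw [this]
      simp
      ring
    · have : ∀ k, Real.Gamma (α k + m k) / Real.Gamma (α k)
          = (if k = i then α k else 1) * (if k = j then α k else 1) := by
        intro k
        have h2 := (hα k)
        have h3 := (Real.Gamma_pos_of_pos h2).ne'
        by_cases hk : k = i
        · have hkj : k ≠ j := fun h => hij (hk.symm.trans h)
          simp only [hm, if_pos hk, if_neg hkj]
          simp only [add_zero, Nat.cast_one, mul_one]
          rw [Real.Gamma_add_one h2.ne']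
          field_simp
        · by_cases hkj : k = j
          · simp only [hm, if_neg hk, if_pos hkj]
            simp only [zero_add, Nat.cast_one, one_mul]
            rw [Real.Gamma_add_one h2.ne']
            field_simp
          · simp [hm, hk, hkj, h3]
      simp_rw [this]
      rw [Finset.prod_mul_distrib]
      simp [hij]
  · rw [← Real.rpow_sum_of_pos ht1]
    congr 1
    rw [Finset.sum_neg_distrib, Finset.sum_add_distrib]
    congr 2
    simp only [hm]
    push_cast
    rw [Finset.sum_add_distrib]
    simp
    norm_num

lemma aux_second {K : ℕ} (hK : 0 < K) {Ω : Type*} [MeasurableSpace Ω] (μ : Measure Ω)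
    [IsProbabilityMeasure μ]
    (α : Fin K → ℝ) (hα : ∀ i, 0 < α i)
    (W : Fin K → Ω → ℝ) (hWmeas : ∀ i, Measurable (W i))
    (hWindep : iIndepFun W μ)
    (hWlaw : ∀ i, μ.map (W i) = gammaMeasure (α i) 1) (i j : Fin K) :
    ∫ ω, (W i ω / ∑ k, W k ω) * (W j ω / ∑ k, W k ω) ∂μ
      = (α i * α j + if i = j then α i else 0) / ((∑ k, α k) * ((∑ k, α k) + 1)) := by
  have : Nonempty (Fin K) := ⟨⟨0, hK⟩⟩
  have hA : 0 < ∑ k, α k := Finset.sum_pos (fun k _ => hα k) Finset.univ_nonempty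
  have hC : 0 ≤ α i * α j + if i = j then α i else 0 := by
    have := hα i; have := hα j
    split_ifs <;> positivity
  have hall : ∀ᵐ ω ∂μ, ∀ k, 0 < W k ω :=
    ae_all_iff.2 fun k => aux_pos_s15 μ (α k) (W k) (hWmeas k) (hWlaw k)
  have hnn : 0 ≤ᵐ[μ] fun ω => (W i ω / ∑ k, W k ω) * (W j ω / ∑ k, W k ω) := by
    filter_upwards [hall] with ω hω
    have hS : 0 < ∑ k, W k ω := Finset.sum_pos (fun k _ => hω k) Finset.univ_nonempty
    have := hω i; have := hω j
    simp only [Pi.zero_apply]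
    positivity
  have hmS : Measurable fun ω => ∑ k, W k ω := Finset.measurable_sum _ (fun k _ => hWmeas k)
  have hmi := hWmeas i
  have hmj := hWmeas j
  rw [integral_eq_lintegral_of_nonneg_ae hnn (Measurable.aestronglyMeasurable (by fun_prop))]
  have key : ∫⁻ ω, ENNReal.ofReal ((W i ω / ∑ k, W k ω) * (W j ω / ∑ k, W k ω)) ∂μ
      = ENNReal.ofReal ((α i * α j + if i = j then α i else 0)
        / ((∑ k, α k) * ((∑ k, α k) + 1))) := by
    calc _ = ∫⁻ ω, (∫⁻ t in Set.Ioi (0:ℝ),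
          ENNReal.ofReal (t * (W i ω * W j ω * Real.exp (-((∑ k, W k ω) * t))))) ∂μ := by
          apply lintegral_congr_ae
          filter_upwards [hall] with ω hω
          have hS : 0 < ∑ k, W k ω := Finset.sum_pos (fun k _ => hω k) Finset.univ_nonempty
          have hi := hω i; have hj := hω j
          have e : ∀ t : ℝ, ENNReal.ofReal (t * (W i ω * W j ω * Real.exp (-((∑ k, W k ω) * t))))
              = ENNReal.ofReal (W i ω * W j ω)
                * ENNReal.ofReal (t * Real.exp (-((∑ k, W k ω) * t))) := by
            intro t
            rw [← ENNReal.ofReal_mul (by positivity)]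
            congr 1; ring
          simp_rw [e]
          rw [lintegral_const_mul _ (by fun_prop), aux_inv_sq _ hS,
            ← ENNReal.ofReal_mul (by positivity)]
          congr 1
          field_simp
      _ = ∫⁻ t in Set.Ioi (0:ℝ), (∫⁻ ω,
          ENNReal.ofReal (t * (W i ω * W j ω * Real.exp (-((∑ k, W k ω) * t)))) ∂μ) := by
          rw [lintegral_lintegral_swap]
          apply Measurable.aemeasurable
          have h1 : Measurable fun z : Ω × ℝ => ∑ k, W k z.1 := hmS.comp measurable_fst
          have h2 : Measurable fun z : Ω × ℝ => W i z.1 := hmi.comp measurable_fst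
          have h3 : Measurable fun z : Ω × ℝ => W j z.1 := hmj.comp measurable_fst
          simp only [Function.uncurry_def]
          fun_prop
      _ = ∫⁻ t in Set.Ioi (0:ℝ), ENNReal.ofReal (α i * α j + if i = j then α i else 0)
            * ENNReal.ofReal (t * (1 + t) ^ (-((∑ k, α k) + 2))) := by
          apply setLIntegral_congr_fun measurableSet_Ioi
          intro t ht
          have ht0 : 0 < t := ht
          simp only
          simp_rw [ENNReal.ofReal_mul ht0.le]
          rw [lintegral_const_mul _ (by fun_prop),
            aux_joint μ α hα W hWmeas hWindep hWlaw i j t ht0, ENNReal.ofReal_mul hC]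
          ring
      _ = _ := by
          rw [lintegral_const_mul _ (by fun_prop), aux_beta _ hA, ← ENNReal.ofReal_mul hC]
          congr 1
          field_simp
  rw [key, ENNReal.toReal_ofReal (by positivity)]

/-- **Remainder bound for the plug-in expansion of Dirichlet-expected losses.**
Let `ℓ : ℝ^K → ℝ` be twice continuously differentiable on an open convex
neighborhood `U` of the probability simplex, with gradient `grad` and Hessian
`Hess` (viewed at each point as a linear map `ℝ^K → ℝ^K`), where the Hessian
is `G`-Lipschitz in operator norm on `U`.  Let `π` be a Dirichlet(α) random
vector realized as `π_i = W_i / Σ_j W_j` with `W_i` independent Gamma(α_i, 1)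
random variables, `α₀ = Σ_j α_j`, `p = α/α₀`, and let
`L₁(p) = ½ tr(Hess(p)(Diag(p) − p pᵀ))` (written via matrix entries
`Hess(p)_{ij} = (Hess(p) e_j)_i`).  Then the remainder
`R(α) = 𝔼[ℓ(π)] − ℓ(p) − L₁(p)/(α₀ + 1)` satisfies
`|R(α)| ≤ (G/3)(1 − ‖p‖₂²)/(α₀ + 1) ≤ G/(3(α₀ + 1))`. -/
theorem dirichlet_plugin_remainder_bound {K : ℕ} (hK : 0 < K)
    {Ω : Type*} [MeasurableSpace Ω] (μ : Measure Ω) [IsProbabilityMeasure μ]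
    (U : Set (EuclideanSpace ℝ (Fin K))) (hUopen : IsOpen U) (hUconv : Convex ℝ U)
    (hUsimplex : probSimplex K ⊆ U)
    (ℓ : EuclideanSpace ℝ (Fin K) → ℝ)
    (grad : EuclideanSpace ℝ (Fin K) → EuclideanSpace ℝ (Fin K))
    (Hess : EuclideanSpace ℝ (Fin K) →
      EuclideanSpace ℝ (Fin K) →L[ℝ] EuclideanSpace ℝ (Fin K))
    (hℓ : ContDiffOn ℝ 2 ℓ U)
    (hgrad : ∀ x ∈ U, HasGradientAt ℓ (grad x) x)
    (hhess : ∀ x ∈ U, HasFDerivAt grad (Hess x) x)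
    (G : ℝ) (hG : 0 ≤ G)
    (hlip : ∀ u ∈ U, ∀ v ∈ U, ‖Hess u - Hess v‖ ≤ G * ‖u - v‖)
    (α : Fin K → ℝ) (hα : ∀ i, 0 < α i)
    (W : Fin K → Ω → ℝ) (hWmeas : ∀ i, Measurable (W i))
    (hWindep : iIndepFun W μ)
    (hWlaw : ∀ i, μ.map (W i) = gammaMeasure (α i) 1)
    (π : Ω → EuclideanSpace ℝ (Fin K))
    (hπ : ∀ ω i, π ω i = W i ω / ∑ j, W j ω)
    (α₀ : ℝ) (hα₀ : α₀ = ∑ j, α j)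
    (p : EuclideanSpace ℝ (Fin K)) (hp : ∀ i, p i = α i / α₀)
    (L1 : ℝ)
    (hL1 : L1 = (1 / 2) * ∑ i, ∑ j,
      Hess p (EuclideanSpace.single j 1) i * ((if j = i then p j else 0) - p j * p i))
    (R : ℝ) (hR : R = (∫ ω, ℓ (π ω) ∂μ) - ℓ p - L1 / (α₀ + 1)) :
    |R| ≤ G / 3 * (1 - ‖p‖ ^ 2) / (α₀ + 1) ∧
      G / 3 * (1 - ‖p‖ ^ 2) / (α₀ + 1) ≤ G / (3 * (α₀ + 1)) := by
  have : Nonempty (Fin K) := ⟨⟨0, hK⟩⟩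
  have hA : 0 < α₀ := hα₀ ▸ Finset.sum_pos (fun k _ => hα k) Finset.univ_nonempty
  have hA1 : 0 < α₀ + 1 := by linarith
  have hall : ∀ᵐ ω ∂μ, ∀ k, 0 < W k ω :=
    ae_all_iff.2 fun k => aux_pos_s15 μ (α k) (W k) (hWmeas k) (hWlaw k)
  have hppos : ∀ i, 0 ≤ p i := fun i => by rw [hp]; exact (div_pos (hα i) hA).le
  have hpsum : ∑ i, p i = 1 := by
    simp_rw [hp]; rw [← Finset.sum_div, ← hα₀, div_self hA.ne']
  have hpU : p ∈ U := hUsimplex ⟨hppos, hpsum⟩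
  have hsimp : ∀ᵐ ω ∂μ, π ω ∈ probSimplex K := by
    filter_upwards [hall] with ω hω
    have hS : 0 < ∑ k, W k ω := Finset.sum_pos (fun k _ => hω k) Finset.univ_nonempty
    refine ⟨fun i => ?_, ?_⟩
    · rw [hπ]; exact (div_pos (hω i) hS).le
    · simp_rw [hπ]; rw [← Finset.sum_div, div_self hS.ne']
  have hle1 : ∀ q ∈ probSimplex K, ∀ i, q i ≤ 1 := by
    intro q hq i
    rw [← hq.2]
    exact Finset.single_le_sum (fun k _ => hq.1 k) (Finset.mem_univ i)
  have hnorm : ∀ q ∈ probSimplex K, ‖q‖ ≤ 1 := by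
    intro q hq
    have h : ‖q‖ ^ 2 ≤ 1 := by
      rw [EuclideanSpace.real_norm_sq_eq, ← hq.2]
      apply Finset.sum_le_sum
      intro i _
      have := hq.1 i; have := hle1 q hq i
      nlinarith
    nlinarith [norm_nonneg q]
  have hmS : Measurable fun ω => ∑ k, W k ω := Finset.measurable_sum _ (fun k _ => hWmeas k)
  have hmi : ∀ i, Measurable fun ω => π ω i := by
    intro i
    simp_rw [hπ]
    exact (hWmeas i).div hmS
  have hmπ : Measurable π := by
    have h := (WithLp.measurable_toLp 2 (Fin K → ℝ)).comp (measurable_pi_lambda _ hmi)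
    exact h
  have hI1 : ∀ i, Integrable (fun ω => π ω i) μ := by
    intro i
    refine Integrable.of_bound (hmi i).aestronglyMeasurable 1 ?_
    filter_upwards [hsimp] with ω hω
    rw [Real.norm_of_nonneg (hω.1 i)]
    exact hle1 _ hω i
  have hI2 : ∀ i j, Integrable (fun ω => π ω i * π ω j) μ := by
    intro i j
    refine Integrable.of_bound ((hmi i).mul (hmi j)).aestronglyMeasurable 1 ?_
    filter_upwards [hsimp] with ω hω
    rw [Real.norm_of_nonneg (mul_nonneg (hω.1 i) (hω.1 j))]
    exact mul_le_one₀ (hle1 _ hω i) (hω.1 j) (hle1 _ hω j)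
  have hE2 : ∀ i j, ∫ ω, π ω i * π ω j ∂μ
      = (α i * α j + if i = j then α i else 0) / (α₀ * (α₀ + 1)) := by
    intro i j
    simp_rw [hπ]
    rw [hα₀]
    exact aux_second hK μ α hα W hWmeas hWindep hWlaw i j
  have hE1 : ∀ i, ∫ ω, π ω i ∂μ = p i := by
    intro i
    have h1 : ∫ ω, π ω i ∂μ = ∫ ω, ∑ j, π ω i * π ω j ∂μ := by
      apply integral_congr_ae
      filter_upwards [hsimp] with ω hω
      rw [← Finset.mul_sum, hω.2, mul_one]
    rw [h1, integral_finsetSum _ (fun j _ => hI2 i j)]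
    simp_rw [hE2]
    rw [← Finset.sum_div, Finset.sum_add_distrib, ← Finset.mul_sum, ← hα₀, hp]
    simp
    field_simp
  have hD1 : ∀ i, Integrable (fun ω => π ω i - p i) μ := fun i =>
    (hI1 i).sub (integrable_const _)
  have hED1 : ∀ i, ∫ ω, (π ω i - p i) ∂μ = 0 := by
    intro i
    rw [integral_sub (hI1 i) (integrable_const _), hE1]
    simp
  have hDe : ∀ i j, (fun ω => (π ω j - p j) * (π ω i - p i))
      = fun ω => (π ω j * π ω i - p i * (π ω j - p j)) - p j * π ω i := by
    intro i j; funext ω; ring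
  have hD2 : ∀ i j, Integrable (fun ω => (π ω j - p j) * (π ω i - p i)) μ := by
    intro i j
    rw [hDe]
    exact ((hI2 j i).sub ((hD1 j).const_mul _)).sub ((hI1 i).const_mul _)
  have hED2 : ∀ i j, ∫ ω, (π ω j - p j) * (π ω i - p i) ∂μ
      = ((if j = i then p j else 0) - p j * p i) / (α₀ + 1) := by
    intro i j
    have hX : Integrable (fun ω => π ω j * π ω i - p i * (π ω j - p j)) μ :=
      (hI2 j i).sub ((hD1 j).const_mul _)
    rw [hDe, integral_sub hX ((hI1 i).const_mul _),
      integral_sub (hI2 j i) ((hD1 j).const_mul _), integral_const_mul, integral_const_mul,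
      hED1, hE1, hE2]
    have e : (if j = i then p j else 0) = (if j = i then α j else 0) / α₀ := by
      split_ifs
      · exact hp j
      · simp
    rw [e, hp, hp]
    field_simp
    ring
  -- squared norm
  have hN : (fun ω => ‖π ω - p‖ ^ 2) = fun ω => ∑ i, (π ω i - p i) * (π ω i - p i) := by
    funext ω
    rw [EuclideanSpace.real_norm_sq_eq]
    simp [pow_two]
  have hNI : Integrable (fun ω => ‖π ω - p‖ ^ 2) μ := by
    rw [hN]; exact integrable_finsetSum _ (fun i _ => hD2 i i)
  have hNE : ∫ ω, ‖π ω - p‖ ^ 2 ∂μ = (1 - ‖p‖ ^ 2) / (α₀ + 1) := by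
    rw [hN, integral_finsetSum _ (fun i _ => hD2 i i)]
    simp_rw [hED2]
    rw [← Finset.sum_div, EuclideanSpace.real_norm_sq_eq]
    simp [hpsum, pow_two]
  -- Taylor polynomial
  have hlin : ∀ d : EuclideanSpace ℝ (Fin K), ⟪grad p, d⟫ = ∑ i, grad p i * d i := by
    intro d
    rw [PiLp.inner_apply]
    simp [mul_comm]
  have hquad : ∀ d : EuclideanSpace ℝ (Fin K), ⟪Hess p d, d⟫
      = ∑ i, ∑ j, Hess p (EuclideanSpace.single j 1) i * (d j * d i) := by
    intro d
    have hd : d = ∑ j, d j • EuclideanSpace.single j (1:ℝ) := by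
      ext i
      simp [Pi.single_apply]
    rw [PiLp.inner_apply]
    apply Finset.sum_congr rfl
    intro i _
    have h : Hess p d i = ∑ j, d j * Hess p (EuclideanSpace.single j 1) i := by
      conv_lhs => rw [hd, map_sum]
      simp
    rw [h]
    simp only [RCLike.inner_apply, conj_trivial, Finset.mul_sum]
    exact Finset.sum_congr rfl (fun j _ => by ring)
  set T : Ω → ℝ := fun ω => ℓ p + ⟪grad p, π ω - p⟫ + 1 / 2 * ⟪Hess p (π ω - p), π ω - p⟫ with hT
  have hT1 : Integrable (fun ω => ⟪grad p, π ω - p⟫) μ := by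
    simp_rw [hlin]
    exact integrable_finsetSum _ (fun i _ => (hD1 i).const_mul _)
  have hT2 : Integrable (fun ω => ⟪Hess p (π ω - p), π ω - p⟫) μ := by
    simp_rw [hquad]
    exact integrable_finsetSum _ (fun i _ => integrable_finsetSum _
      (fun j _ => (hD2 i j).const_mul _))
  have hTE1 : ∫ ω, ⟪grad p, π ω - p⟫ ∂μ = 0 := by
    simp_rw [hlin, PiLp.sub_apply]
    rw [integral_finsetSum _ (fun i _ => (hD1 i).const_mul _)]
    apply Finset.sum_eq_zero
    intro i _
    rw [integral_const_mul]
    have := hED1 i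
    rw [this, mul_zero]
  have hTE2 : ∫ ω, ⟪Hess p (π ω - p), π ω - p⟫ ∂μ = 2 * L1 / (α₀ + 1) := by
    simp_rw [hquad, PiLp.sub_apply]
    rw [integral_finsetSum _ (fun i _ => integrable_finsetSum _
      (fun j _ => (hD2 i j).const_mul _)), hL1]
    have : ∀ x : ℝ, 2 * (1 / 2 * x) / (α₀ + 1) = x / (α₀ + 1) := fun x => by ring
    rw [this, Finset.sum_div]
    apply Finset.sum_congr rfl
    intro i _
    rw [integral_finsetSum _ (fun j _ => (hD2 i j).const_mul _), Finset.sum_div]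
    apply Finset.sum_congr rfl
    intro j _
    rw [integral_const_mul]
    have := hED2 i j
    rw [this, mul_div_assoc]
  have hT01 : Integrable (fun ω => ℓ p + ⟪grad p, π ω - p⟫) μ := (integrable_const _).add hT1
  have hTI : Integrable T μ := hT01.add (hT2.const_mul _)
  have hTE : ∫ ω, T ω ∂μ = ℓ p + L1 / (α₀ + 1) := by
    rw [hT, integral_add hT01 (hT2.const_mul _), integral_add (integrable_const _) hT1,
      integral_const_mul, hTE1, hTE2]
    simp
    ring
  have hbd : ∀ᵐ ω ∂μ, ‖ℓ (π ω) - T ω‖ ≤ G / 3 * ‖π ω - p‖ ^ 2 := by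
    filter_upwards [hsimp] with ω hω
    have h1 := aux_taylor U hUconv ℓ grad Hess hgrad hhess G hlip p (π ω) hpU (hUsimplex hω)
    have h2 : ‖π ω - p‖ ≤ 2 := by
      have := norm_sub_le (π ω) p
      have := hnorm _ hω
      have := hnorm p ⟨hppos, hpsum⟩
      linarith
    rw [Real.norm_eq_abs]
    refine h1.trans ?_
    have : G / 6 * ‖π ω - p‖ ^ 3 = G / 6 * ‖π ω - p‖ ^ 2 * ‖π ω - p‖ := by ring
    rw [this]
    calc _ ≤ G / 6 * ‖π ω - p‖ ^ 2 * 2 := by gcongr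
      _ = _ := by ring
  have hℓm : AEStronglyMeasurable (fun ω => ℓ (π ω)) μ := by
    have h1 : Measurable (U.indicator ℓ) := by
      classical
      have : U.indicator ℓ = U.piecewise ℓ (fun _ => 0) := by
        ext x; simp [Set.indicator, Set.piecewise]
      rw [this]
      exact hℓ.continuousOn.measurable_piecewise continuousOn_const hUopen.measurableSet
    refine (h1.comp hmπ).aestronglyMeasurable.congr ?_
    filter_upwards [hsimp] with ω hω
    simp [Set.indicator_of_mem (hUsimplex hω)]
  have hRI : Integrable (fun ω => ℓ (π ω) - T ω) μ :=
    (hNI.const_mul (G / 3)).mono' (hℓm.sub hTI.aestronglyMeasurable) hbd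
  have hℓI : Integrable (fun ω => ℓ (π ω)) μ := by
    have := hRI.add hTI
    refine this.congr (ae_of_all _ fun ω => ?_)
    simp
  have hR' : R = ∫ ω, (ℓ (π ω) - T ω) ∂μ := by
    rw [integral_sub hℓI hTI, hTE, hR]; ring
  constructor
  · rw [hR', ← Real.norm_eq_abs]
    refine (norm_integral_le_of_norm_le (hNI.const_mul (G / 3)) hbd).trans ?_
    rw [integral_const_mul, hNE, mul_div_assoc]
  · have : G / (3 * (α₀ + 1)) = G / 3 * 1 / (α₀ + 1) := by field_simp
    rw [this]
    gcongr
    nlinarith [sq_nonneg ‖p‖]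
end

section
/- Let Δ^{K−1} be the probability simplex in ℝ^K, and let ℓ : ℝ^K → ℝ be twice continuously differentiable on an open convex neighborhood U of Δ^{K−1}, with Hessian H_ℓ satisfying ‖H_ℓ(q)‖_op ≤ M for all q ∈ U and ‖H_ℓ(u) − H_ℓ(v)‖_op ≤ G‖u − v‖₂ for all u, v ∈ U, for some constants M, G ≥ 0. Let α ∈ ℝ_{>0}^K, α₀ = Σ_{j=1}^K α_j, p = α/α₀, and let π be a Dirichlet(α)-distributed random vector. Then 𝔼[ℓ(π)] = ℓ(p) + L₁(p)/(α₀ + 1) + R(α), where L₁(p) = (1/2) tr(H_ℓ(p)(Diag(p) − p pᵀ)) satisfies |L₁(p)| ≤ (1/2)(1 − 1/K)M and the remainder satisfies |R(α)| ≤ G/(3(α₀ + 1)). In particular, |𝔼[ℓ(π)] − ℓ(p)| ≤ ((1/2)(1 − 1/K)M + G/3)/(α₀ + 1), so the Dirichlet-expected loss equals the plug-in loss ℓ(p) up to an error of order O((α₀ + 1)⁻¹). -/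
open MeasureTheory ProbabilityTheory
open scoped RealInnerProductSpace

lemma gamma_laplace (a t : ℝ) (ha : 0 < a) (ht : 0 < t) (n : ℕ) :
    ∫⁻ x, ENNReal.ofReal (x ^ n * Real.exp (-(t * x))) ∂(gammaMeasure a 1) =
      ENNReal.ofReal (Real.Gamma (a + n) / Real.Gamma a * (1 + t) ^ (-(a + n))) := by
  have h1 : 0 < a + n := by positivity
  rw [gammaMeasure, lintegral_withDensity_eq_lintegral_mul _
    (by exact (measurable_gammaPDFReal a 1).ennreal_ofReal) (by fun_prop)]
  have hc : (0:ℝ) ≤ Real.Gamma (a + n) / Real.Gamma a * (1 + t) ^ (-(a + n)) := by positivity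
  have : ∀ᵐ x ∂(volume : Measure ℝ),
      (gammaPDF a 1 * fun x => ENNReal.ofReal (x ^ n * Real.exp (-(t * x)))) x
       = ENNReal.ofReal (Real.Gamma (a + n) / Real.Gamma a * (1 + t) ^ (-(a + n))) *
          gammaPDF (a + n) (1 + t) x := by
    filter_upwards [Measure.ae_ne volume (0:ℝ)] with x hx
    rw [Pi.mul_apply]
    rcases lt_or_gt_of_ne hx with h | h
    · simp [gammaPDF_of_neg h]
    · rw [gammaPDF_of_nonneg h.le, gammaPDF_of_nonneg h.le,
        ← ENNReal.ofReal_mul (by positivity), ← ENNReal.ofReal_mul hc]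
      congr 1
      have e1 : x ^ (a + n - 1) = x ^ (a - 1) * x ^ n := by
        rw [← Real.rpow_natCast, ← Real.rpow_add h]; congr 1; ring
      have e2 : Real.exp (-((1 + t) * x)) = Real.exp (-(1 * x)) * Real.exp (-(t * x)) := by
        rw [← Real.exp_add]; congr 1; ring
      have e3 : (1 + t) ^ (-(a + n)) = ((1 + t) ^ (a + n))⁻¹ := Real.rpow_neg (by positivity) _
      have : (0:ℝ) < (1 + t) ^ (a + n) := by positivity
      have g1 := Real.Gamma_pos_of_pos ha
      have g2 := Real.Gamma_pos_of_pos h1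
      rw [e1, e2, e3, Real.one_rpow]
      field_simp
  rw [lintegral_congr_ae this, lintegral_const_mul _
    (by exact (measurable_gammaPDFReal _ _).ennreal_ofReal),
    lintegral_gammaPDF_eq_one h1 (by positivity), mul_one]

lemma inv_sq_laplace (s : ℝ) (hs : 0 < s) :
    ENNReal.ofReal (1 / s ^ 2) =
      ∫⁻ t in Set.Ioi (0:ℝ), ENNReal.ofReal (t * Real.exp (-(t * s))) := by
  have h := lintegral_gammaPDF_eq_one (a := 2) (r := s) two_pos hs
  have h2 : ∫⁻ x, gammaPDF 2 s x = ∫⁻ x in Set.Ioi (0:ℝ), gammaPDF 2 s x := by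
    rw [← lintegral_indicator measurableSet_Ioi]
    apply lintegral_congr_ae
    filter_upwards [Measure.ae_ne volume (0:ℝ)] with x hx
    rcases lt_or_gt_of_ne hx with h | h
    · rw [Set.indicator_of_notMem (by simpa using h.le), gammaPDF_of_neg h]
    · rw [Set.indicator_of_mem (by simpa using h)]
  rw [h2] at h
  have h3 : ∫⁻ x in Set.Ioi (0:ℝ), gammaPDF 2 s x =
      ∫⁻ t in Set.Ioi (0:ℝ), ENNReal.ofReal (s ^ 2) * ENNReal.ofReal (t * Real.exp (-(t * s))) := by
    apply setLIntegral_congr_fun measurableSet_Ioi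
    intro x hx
    have hx : 0 < x := hx
    simp only
    rw [gammaPDF_of_nonneg hx.le, ← ENNReal.ofReal_mul (by positivity)]
    congr 1
    rw [Real.Gamma_two]
    norm_num
    rw [mul_comm x s]; ring
  rw [h3, lintegral_const_mul _ (by fun_prop)] at h
  rw [one_div, ENNReal.ofReal_inv_of_pos (by positivity)]
  exact (ENNReal.eq_inv_of_mul_eq_one_left (by rw [mul_comm]; exact h)).symm

lemma gamma_ae_pos (a : ℝ) : ∀ᵐ x ∂(gammaMeasure a 1), 0 < x := by
  rw [gammaMeasure, ae_withDensity_iff (by exact (measurable_gammaPDFReal a 1).ennreal_ofReal)]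
  filter_upwards [Measure.ae_ne volume (0:ℝ)] with x hx h
  by_contra h'
  exact h (gammaPDF_of_neg (lt_of_le_of_ne (not_lt.1 h') hx))

lemma gamma_moment {K : ℕ} {Ω : Type*} [MeasurableSpace Ω] (μ : Measure Ω) [IsProbabilityMeasure μ]
    (α : Fin K → ℝ) (hα : ∀ i, 0 < α i)
    (W : Fin K → Ω → ℝ) (hWmeas : ∀ i, Measurable (W i))
    (hWindep : iIndepFun W μ)
    (hWlaw : ∀ i, μ.map (W i) = gammaMeasure (α i) 1) (hpos : ∀ᵐ ω ∂μ, ∀ i, 0 < W i ω)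
    (i j : Fin K) (t : ℝ) (ht : 0 < t) :
    ∫⁻ ω, ENNReal.ofReal (W i ω * W j ω * Real.exp (-(t * ∑ k, W k ω))) ∂μ =
     ENNReal.ofReal (α i * (α j + if i = j then 1 else 0)) *
      ENNReal.ofReal ((1 + t) ^ (-(∑ k, α k + 2))) := by
  set n : Fin K → ℕ := fun k => (if k = i then 1 else 0) + (if k = j then 1 else 0) with hn
  have h1 : ∀ᵐ ω ∂μ, ENNReal.ofReal (W i ω * W j ω * Real.exp (-(t * ∑ k, W k ω))) =
      ∏ k, ENNReal.ofReal (W k ω ^ n k * Real.exp (-(t * W k ω))) := by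
    filter_upwards [hpos] with ω hω
    rw [← ENNReal.ofReal_prod_of_nonneg (fun k _ => by have := hω k; positivity)]
    congr 1
    rw [Finset.prod_mul_distrib, ← Real.exp_sum, Finset.mul_sum, ← Finset.sum_neg_distrib]
    congr 1
    simp only [hn, pow_add, Finset.prod_mul_distrib, pow_ite, pow_one, pow_zero,
      Finset.prod_ite_eq', Finset.mem_univ, if_true]
  rw [lintegral_congr_ae h1]
  have h2 := lintegral_prod_eq_prod_lintegral_of_indepFun (μ := μ) Finset.univ
    (fun k ω => ENNReal.ofReal (W k ω ^ n k * Real.exp (-(t * W k ω))))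
    (hWindep.comp (fun k x => ENNReal.ofReal (x ^ n k * Real.exp (-(t * x)))) (by fun_prop))
    (fun k => by have := hWmeas k; fun_prop)
  rw [h2]
  have h3 : ∀ k, ∫⁻ ω, ENNReal.ofReal (W k ω ^ n k * Real.exp (-(t * W k ω))) ∂μ =
      ENNReal.ofReal (Real.Gamma (α k + n k) / Real.Gamma (α k) * (1 + t) ^ (-(α k + n k))) := by
    intro k
    rw [← gamma_laplace (α k) t (hα k) ht (n k), ← hWlaw k, lintegral_map (by fun_prop) (hWmeas k)]
  simp_rw [h3]
  have hnn : ∀ k, 0 < Real.Gamma (α k + n k) / Real.Gamma (α k) := fun k => by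
    have := hα k
    positivity
  rw [← ENNReal.ofReal_prod_of_nonneg (fun k _ => by have := hnn k; positivity),
    Finset.prod_mul_distrib, ENNReal.ofReal_mul (Finset.prod_nonneg fun k _ => (hnn k).le)]
  congr 2
  · have : ∀ k, Real.Gamma (α k + n k) / Real.Gamma (α k) =
      (if k = i then α k else 1) * (if k = j then (α k + if i = j then 1 else 0) else 1) := by
      intro k
      have g := (Real.Gamma_pos_of_pos (hα k)).ne'
      have e1 := Real.Gamma_add_one (hα k).ne'
      have e2 := Real.Gamma_add_one (add_pos (hα k) one_pos).ne'
      by_cases hi : k = i <;> by_cases hj : k = j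
      · have hij : i = j := hi.symm.trans hj
        have : α k + n k = α k + 1 + 1 := by simp [hn, hi, hij]; ring
        rw [this, e2, e1]
        simp only [if_pos hi, if_pos hj, if_pos hij]
        field_simp
      · have hij : ¬ i = j := fun h => hj (hi.trans h)
        have : α k + n k = α k + 1 := by simp [hn, hi, hij]
        rw [this, e1]
        simp only [if_pos hi, if_neg hj]
        field_simp
      · have hij : ¬ i = j := fun h => hi (hj.trans h.symm)
        have : α k + n k = α k + 1 := by simp [hn, if_neg hi, if_pos hj]
        rw [this, e1]
        simp only [if_neg hi, if_pos hj, if_neg hij]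
        field_simp
        simp
      · have : α k + n k = α k := by simp [hn, hi, hj]
        rw [this]
        simp only [if_neg hi, if_neg hj]
        field_simp
    simp_rw [this, Finset.prod_mul_distrib, Finset.prod_ite_eq']
    simp
  · rw [← Real.rpow_sum_of_pos (by positivity), Finset.sum_neg_distrib, Finset.sum_add_distrib]
    congr 3
    simp only [hn, Nat.cast_add, Finset.sum_add_distrib]
    simp
    norm_num

lemma taylor_bound {E : Type*} [NormedAddCommGroup E] [InnerProductSpace ℝ E] [CompleteSpace E]
    (U : Set E) (hUconv : Convex ℝ U) (ℓ : E → ℝ) (grad : E → E) (Hess : E → E →L[ℝ] E)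
    (hgrad : ∀ x ∈ U, HasGradientAt ℓ (grad x) x)
    (hhess : ∀ x ∈ U, HasFDerivAt grad (Hess x) x)
    (G : ℝ) 
    (hlip : ∀ u ∈ U, ∀ v ∈ U, ‖Hess u - Hess v‖ ≤ G * ‖u - v‖)
    (p x : E) (hp : p ∈ U) (hx : x ∈ U) :
    |ℓ x - ℓ p - ⟪grad p, x - p⟫ - 1 / 2 * ⟪Hess p (x - p), x - p⟫| ≤ G / 6 * ‖x - p‖ ^ 3 := by
  set v := x - p with hv
  have hmem : ∀ t ∈ Set.Icc (0:ℝ) 1, p + t • v ∈ U := fun t ht => 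
    hUconv.add_smul_sub_mem hp hx ht
  have hline : ∀ t : ℝ, HasDerivAt (fun t : ℝ => p + t • v) v t := fun t => by
    simpa using ((hasDerivAt_id t).smul_const v).const_add p
  have d1 : ∀ t ∈ Set.Icc (0:ℝ) 1, HasDerivAt (fun t : ℝ => grad (p + t • v) - grad p - t • Hess p v)
      (Hess (p + t • v) v - Hess p v) t := fun t ht => by
    have h := (hhess _ (hmem t ht)).comp_hasDerivAt t (hline t)
    exact ((h.sub_const (grad p)).sub ((hasDerivAt_id t).smul_const (Hess p v))).congr_deriv (by simp)
  have b1 : ∀ t ∈ Set.Icc (0:ℝ) 1, ‖grad (p + t • v) - grad p - t • Hess p v‖ ≤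
      G / 2 * ‖v‖ ^ 2 * t ^ 2 := by
    intro t ht
    refine image_norm_le_of_norm_deriv_right_le_deriv_boundary 
      (f := fun t : ℝ => grad (p + t • v) - grad p - t • Hess p v)
      (B := fun t => G / 2 * ‖v‖ ^ 2 * t ^ 2) (B' := fun t => G * ‖v‖ ^ 2 * t) 
      (fun t ht => (d1 t ht).continuousAt.continuousWithinAt)
      (fun t ht => (d1 t ⟨ht.1, ht.2.le⟩).hasDerivWithinAt) (by simp) (fun t => ?_) ?_ ht
    · exact ((hasDerivAt_pow 2 t).const_mul (G / 2 * ‖v‖ ^ 2)).congr_deriv (by simp; ring)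
    · intro t ht
      have h := hlip _ (hmem t ⟨ht.1, ht.2.le⟩) p hp
      rw [add_sub_cancel_left, norm_smul, Real.norm_of_nonneg ht.1] at h
      calc ‖Hess (p + t • v) v - Hess p v‖ = ‖(Hess (p + t • v) - Hess p) v‖ := by simp
        _ ≤ ‖Hess (p + t • v) - Hess p‖ * ‖v‖ := ContinuousLinearMap.le_opNorm _ _
        _ ≤ G * (t * ‖v‖) * ‖v‖ := by gcongr
        _ = G * ‖v‖ ^ 2 * t := by ring
  have d2 : ∀ t ∈ Set.Icc (0:ℝ) 1, HasDerivAt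
      (fun t : ℝ => ℓ (p + t • v) - ℓ p - t * ⟪grad p, v⟫ - t ^ 2 * (1 / 2 * ⟪Hess p v, v⟫))
      ⟪grad (p + t • v) - grad p - t • Hess p v, v⟫ t := fun t ht => by
    have h := (hgrad _ (hmem t ht)).hasFDerivAt.comp_hasDerivAt t (hline t)
    have h' := ((h.sub_const (ℓ p)).sub ((hasDerivAt_id t).mul_const ⟪grad p, v⟫)).sub
      ((hasDerivAt_pow 2 t).mul_const (1 / 2 * ⟪Hess p v, v⟫))
    refine h'.congr_deriv ?_
    simp only [InnerProductSpace.toDual_apply_apply, inner_sub_left, inner_smul_left]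
    simp; ring
  have := image_norm_le_of_norm_deriv_right_le_deriv_boundary 
      (f := fun t : ℝ => ℓ (p + t • v) - ℓ p - t * ⟪grad p, v⟫ - t ^ 2 * (1 / 2 * ⟪Hess p v, v⟫))
      (B := fun t => G / 6 * ‖v‖ ^ 3 * t ^ 3) (B' := fun t => G / 2 * ‖v‖ ^ 3 * t ^ 2) 
      (a := 0) (b := 1)
      (fun t ht => (d2 t ht).continuousAt.continuousWithinAt)
      (fun t ht => (d2 t ⟨ht.1, ht.2.le⟩).hasDerivWithinAt) (by simp) (fun t => by
        exact ((hasDerivAt_pow 3 t).const_mul (G / 6 * ‖v‖ ^ 3)).congr_deriv (by simp; ring)) (fun t ht => by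
        calc _ ≤ ‖grad (p + t • v) - grad p - t • Hess p v‖ * ‖v‖ := norm_inner_le_norm _ _
          _ ≤ (G / 2 * ‖v‖ ^ 2 * t ^ 2) * ‖v‖ := by gcongr; exact b1 t ⟨ht.1, ht.2.le⟩
          _ = _ := by ring) (Set.right_mem_Icc.2 zero_le_one)
  simpa [hv] using this

lemma inner_expand {K : ℕ} (A : EuclideanSpace ℝ (Fin K) →L[ℝ] EuclideanSpace ℝ (Fin K))
    (v : EuclideanSpace ℝ (Fin K)) :
    ⟪A v, v⟫ = ∑ i, ∑ j, A (EuclideanSpace.single j 1) i * (v j * v i) := by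
  have h : v = ∑ j, v j • EuclideanSpace.single j (1:ℝ) := by
    ext i; simp [Finset.sum_apply, Pi.single_apply]
  have h2 : A v = ∑ j, v j • A (EuclideanSpace.single j (1:ℝ)) := by
    conv_lhs => rw [h]
    simp only [map_sum, map_smul]
  rw [h2, PiLp.inner_apply]
  refine Finset.sum_congr rfl fun i _ => ?_
  simp only [RCLike.inner_apply, conj_trivial]
  simp [Finset.sum_apply, Finset.mul_sum]
  refine Finset.sum_congr rfl fun j _ => by ring

lemma L1_bound {K : ℕ} (A : EuclideanSpace ℝ (Fin K) →L[ℝ] EuclideanSpace ℝ (Fin K))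
    (M : ℝ) (hA : ‖A‖ ≤ M) (hK : 0 < K) (p : EuclideanSpace ℝ (Fin K)) (hp : p ∈ probSimplex K) :
    |∑ i, ∑ j, A (EuclideanSpace.single j 1) i * ((if j = i then p j else 0) - p j * p i)| ≤
      (1 - 1 / (K:ℝ)) * M := by
  obtain ⟨hp0, hp1⟩ := hp
  have hM : 0 ≤ M := (norm_nonneg _).trans hA
  have key : ∑ i, ∑ j, A (EuclideanSpace.single j 1) i * ((if j = i then p j else 0) - p j * p i)
      = ∑ k, p k * ⟪A (EuclideanSpace.single k 1 - p), EuclideanSpace.single k 1 - p⟫ := by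
    simp_rw [inner_expand, Finset.mul_sum]
    rw [Finset.sum_comm]
    conv_rhs => rw [Finset.sum_comm]; enter [2, i]; rw [Finset.sum_comm]
    rw [Finset.sum_comm]
    refine Finset.sum_congr rfl fun i _ => Finset.sum_congr rfl fun j _ => ?_
    have : ∀ k, p k * (A (EuclideanSpace.single j 1) i * ((EuclideanSpace.single k (1:ℝ) - p) j * 
       (EuclideanSpace.single k (1:ℝ) - p) i)) = A (EuclideanSpace.single j 1) i * 
       ((if j = k then (if i = k then p k else 0) else 0) - (if j = k then p k * p i else 0)
        - (if i = k then p k * p j else 0) + p k * (p j * p i)) := by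
      intro k
      simp only [PiLp.sub_apply, PiLp.single_apply]
      split_ifs <;> ring
    simp_rw [this, ← Finset.mul_sum, Finset.sum_add_distrib, Finset.sum_sub_distrib,
      ← Finset.sum_mul, hp1, Finset.sum_ite_eq]
    simp [eq_comm]
    left; ring
  have hn : ∀ k, ‖EuclideanSpace.single k (1:ℝ) - p‖ ^ 2 = 1 - 2 * p k + ∑ i, p i ^ 2 := by
    intro k
    rw [norm_sub_sq_real, EuclideanSpace.real_norm_sq_eq p]
    simp [EuclideanSpace.inner_single_left]
  have hsq : 1 / (K:ℝ) ≤ ∑ i, p i ^ 2 := by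
    have h := sq_sum_le_card_mul_sum_sq (s := Finset.univ) (f := fun i => p i)
    rw [hp1] at h
    simp at h
    rw [div_le_iff₀ (by positivity)]
    linarith
  rw [key]
  calc _ ≤ ∑ k, |p k * ⟪A (EuclideanSpace.single k 1 - p), EuclideanSpace.single k 1 - p⟫| :=
        Finset.abs_sum_le_sum_abs _ _
    _ ≤ ∑ k, p k * (M * (1 - 2 * p k + ∑ i, p i ^ 2)) := by
        refine Finset.sum_le_sum fun k _ => ?_
        rw [abs_mul, abs_of_nonneg (hp0 k), ← hn k]
        refine mul_le_mul_of_nonneg_left ?_ (hp0 k)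
        refine (abs_real_inner_le_norm _ _).trans ?_
        rw [sq, ← mul_assoc]
        gcongr
        exact A.le_of_opNorm_le hA _
    _ = M * (1 - ∑ i, p i ^ 2) := by
        have : ∀ k, p k * (M * (1 - 2 * p k + ∑ i, p i ^ 2)) = 
          M * (1 + ∑ i, p i ^ 2) * p k - 2 * M * p k ^ 2 := fun k => by ring
        simp_rw [this, Finset.sum_sub_distrib, ← Finset.mul_sum, hp1]
        ring
    _ ≤ (1 - 1 / (K:ℝ)) * M := by nlinarith

lemma dirichlet_second_moment {K : ℕ} (hK : 0 < K) {Ω : Type*} [MeasurableSpace Ω]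
    (μ : Measure Ω) [IsProbabilityMeasure μ]
    (α : Fin K → ℝ) (hα : ∀ i, 0 < α i)
    (W : Fin K → Ω → ℝ) (hWmeas : ∀ i, Measurable (W i))
    (hWindep : iIndepFun W μ)
    (hWlaw : ∀ i, μ.map (W i) = gammaMeasure (α i) 1) (hpos : ∀ᵐ ω ∂μ, ∀ i, 0 < W i ω) :
    ∀ i j, ∫ ω, (W i ω / ∑ k, W k ω) * (W j ω / ∑ k, W k ω) ∂μ =
      α i * (α j + if i = j then 1 else 0) / ((∑ k, α k) * (∑ k, α k + 1)) := by
  haveI : Nonempty (Fin K) := ⟨⟨0, hK⟩⟩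
  have hS : ∀ᵐ ω ∂μ, 0 < ∑ k, W k ω := by
    filter_upwards [hpos] with ω hω
    exact Finset.sum_pos (fun i _ => hω i) Finset.univ_nonempty
  have hm0 : ∀ i j, 0 ≤ α i * (α j + if i = j then 1 else 0) := fun i j => by
    have := hα i
    have := hα j
    split_ifs <;> positivity
  set C : ENNReal := ∫⁻ t in Set.Ioi (0:ℝ),
    ENNReal.ofReal t * ENNReal.ofReal ((1 + t) ^ (-(∑ k, α k + 2))) with hC
  have key : ∀ i j, ∫⁻ ω, ENNReal.ofReal ((W i ω / ∑ k, W k ω) * (W j ω / ∑ k, W k ω)) ∂μ =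
      ENNReal.ofReal (α i * (α j + if i = j then 1 else 0)) * C := by
    intro i j
    have h1 : ∀ᵐ ω ∂μ, ENNReal.ofReal ((W i ω / ∑ k, W k ω) * (W j ω / ∑ k, W k ω)) =
        ∫⁻ t in Set.Ioi (0:ℝ), ENNReal.ofReal t *
          ENNReal.ofReal (W i ω * W j ω * Real.exp (-(t * ∑ k, W k ω))) := by
      filter_upwards [hpos, hS] with ω hω hs
      have h0 : 0 ≤ W i ω * W j ω := (mul_pos (hω i) (hω j)).le
      have e : (W i ω / ∑ k, W k ω) * (W j ω / ∑ k, W k ω) =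
        (W i ω * W j ω) * (1 / (∑ k, W k ω) ^ 2) := by
        field_simp
      rw [e, ENNReal.ofReal_mul h0, inv_sq_laplace _ hs, ← lintegral_const_mul _ (by fun_prop)]
      refine setLIntegral_congr_fun measurableSet_Ioi fun t ht => ?_
      have ht : 0 < t := ht
      rw [← ENNReal.ofReal_mul h0, ← ENNReal.ofReal_mul ht.le]
      congr 1; ring
    rw [lintegral_congr_ae h1, lintegral_lintegral_swap]
    · rw [hC, ← lintegral_const_mul _ (by fun_prop)]
      refine setLIntegral_congr_fun measurableSet_Ioi fun t ht => ?_
      rw [lintegral_const_mul _ (by fun_prop),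
        gamma_moment μ α hα W hWmeas hWindep hWlaw hpos i j t ht]
      ring
    · simp only [Function.uncurry_def]
      fun_prop
  have hα0 : 0 < ∑ k, α k := Finset.sum_pos (fun i _ => hα i) Finset.univ_nonempty
  have htot : ENNReal.ofReal ((∑ k, α k) * (∑ k, α k + 1)) * C = 1 := by
    have e : (∑ k, α k) * (∑ k, α k + 1) =
        ∑ i, ∑ j, α i * (α j + if i = j then 1 else 0) := by
      simp_rw [← Finset.mul_sum, Finset.sum_add_distrib]
      simp [Finset.sum_mul]
    rw [e, ENNReal.ofReal_sum_of_nonneg (fun i _ => Finset.sum_nonneg fun j _ => hm0 i j),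
      Finset.sum_mul]
    have : ∀ i, ENNReal.ofReal (∑ j, α i * (α j + if i = j then 1 else 0)) * C =
        ∑ j, ∫⁻ ω, ENNReal.ofReal ((W i ω / ∑ k, W k ω) * (W j ω / ∑ k, W k ω)) ∂μ := by
      intro i
      rw [ENNReal.ofReal_sum_of_nonneg (fun j _ => hm0 i j), Finset.sum_mul]
      exact Finset.sum_congr rfl fun j _ => (key i j).symm
    simp_rw [this]
    have e2 : ∀ i, ∑ j, ∫⁻ ω, ENNReal.ofReal ((W i ω / ∑ k, W k ω) * (W j ω / ∑ k, W k ω)) ∂μ =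
        ∫⁻ ω, ∑ j, ENNReal.ofReal ((W i ω / ∑ k, W k ω) * (W j ω / ∑ k, W k ω)) ∂μ := fun i =>
      (lintegral_finsetSum _ (fun j _ => by fun_prop)).symm
    simp_rw [e2]
    rw [← lintegral_finsetSum _ (fun j _ => by fun_prop)]
    have : ∀ᵐ ω ∂μ, ∑ i, ∑ j, ENNReal.ofReal ((W i ω / ∑ k, W k ω) * (W j ω / ∑ k, W k ω)) = 1 := by
      filter_upwards [hpos, hS] with ω hω hs
      have hnn : ∀ i j, 0 ≤ (W i ω / ∑ k, W k ω) * (W j ω / ∑ k, W k ω) := fun i j => by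
        have := hω i
        have := hω j
        positivity
      simp_rw [← ENNReal.ofReal_sum_of_nonneg (fun j _ => hnn _ j)]
      rw [← ENNReal.ofReal_sum_of_nonneg (fun i _ => Finset.sum_nonneg fun j _ => hnn i j)]
      simp_rw [← Finset.mul_sum, ← Finset.sum_mul, ← Finset.sum_div]
      rw [div_self hs.ne']; simp
    rw [lintegral_congr_ae this]; simp
  have hCval : C = ENNReal.ofReal (1 / ((∑ k, α k) * (∑ k, α k + 1))) := by
    rw [one_div, ENNReal.ofReal_inv_of_pos (by positivity)]
    exact ENNReal.eq_inv_of_mul_eq_one_left (by rw [mul_comm]; exact htot)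
  intro i j
  rw [integral_eq_lintegral_of_nonneg_ae, key, hCval, ← ENNReal.ofReal_mul (hm0 i j),
    ENNReal.toReal_ofReal]
  · ring
  · have := hm0 i j
    positivity
  · filter_upwards [hpos, hS] with ω hω hs
    have := hω i
    have := hω j
    simp only [Pi.zero_apply]
    positivity
  · apply Measurable.aestronglyMeasurable
    fun_prop

/-- **Explicit expansion of Dirichlet-expected losses (plug-in approximation).**
Let `ℓ : ℝ^K → ℝ` be twice continuously differentiable on an open convex
neighborhood `U` of the probability simplex, with gradient `grad` and Hessian
`Hess` (viewed at each point as a linear map `ℝ^K → ℝ^K`), where the Hessian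
has operator norm at most `M` on `U` and is `G`-Lipschitz in operator norm on
`U`.  Let `π` be a Dirichlet(α) random vector realized as `π_i = W_i / Σ_j W_j`
with `W_i` independent Gamma(α_i, 1) random variables, `α₀ = Σ_j α_j`,
`p = α/α₀`, and `L₁(p) = ½ tr(Hess(p)(Diag(p) − p pᵀ))` (written via matrix
entries `Hess(p)_{ij} = (Hess(p) e_j)_i`).  Then
`𝔼[ℓ(π)] = ℓ(p) + L₁(p)/(α₀ + 1) + R(α)` with
`|L₁(p)| ≤ ½(1 − 1/K)M` and `|R(α)| ≤ G/(3(α₀ + 1))`; in particular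
`|𝔼[ℓ(π)] − ℓ(p)| ≤ (½(1 − 1/K)M + G/3)/(α₀ + 1)`, i.e. the Dirichlet-expected
loss equals the plug-in loss `ℓ(p)` up to an `O((α₀ + 1)⁻¹)` error. -/
theorem dirichlet_expected_loss_plugin_expansion {K : ℕ} (hK : 0 < K)
    {Ω : Type*} [MeasurableSpace Ω] (μ : Measure Ω) [IsProbabilityMeasure μ]
    (U : Set (EuclideanSpace ℝ (Fin K))) (hUopen : IsOpen U) (hUconv : Convex ℝ U)
    (hUsimplex : probSimplex K ⊆ U)
    (ℓ : EuclideanSpace ℝ (Fin K) → ℝ)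
    (grad : EuclideanSpace ℝ (Fin K) → EuclideanSpace ℝ (Fin K))
    (Hess : EuclideanSpace ℝ (Fin K) →
      EuclideanSpace ℝ (Fin K) →L[ℝ] EuclideanSpace ℝ (Fin K))
    (hℓ : ContDiffOn ℝ 2 ℓ U)
    (hgrad : ∀ x ∈ U, HasGradientAt ℓ (grad x) x)
    (hhess : ∀ x ∈ U, HasFDerivAt grad (Hess x) x)
    (M : ℝ) (hM : 0 ≤ M) (hbound : ∀ q ∈ U, ‖Hess q‖ ≤ M)
    (G : ℝ) (hG : 0 ≤ G)
    (hlip : ∀ u ∈ U, ∀ v ∈ U, ‖Hess u - Hess v‖ ≤ G * ‖u - v‖)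
    (α : Fin K → ℝ) (hα : ∀ i, 0 < α i)
    (W : Fin K → Ω → ℝ) (hWmeas : ∀ i, Measurable (W i))
    (hWindep : iIndepFun W μ)
    (hWlaw : ∀ i, μ.map (W i) = gammaMeasure (α i) 1)
    (π : Ω → EuclideanSpace ℝ (Fin K))
    (hπ : ∀ ω i, π ω i = W i ω / ∑ j, W j ω)
    (α₀ : ℝ) (hα₀ : α₀ = ∑ j, α j)
    (p : EuclideanSpace ℝ (Fin K)) (hp : ∀ i, p i = α i / α₀)
    (L1 : ℝ)
    (hL1 : L1 = (1 / 2) * ∑ i, ∑ j,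
      Hess p (EuclideanSpace.single j 1) i * ((if j = i then p j else 0) - p j * p i))
    (R : ℝ) (hR : R = (∫ ω, ℓ (π ω) ∂μ) - ℓ p - L1 / (α₀ + 1)) :
    (∫ ω, ℓ (π ω) ∂μ) = ℓ p + L1 / (α₀ + 1) + R ∧
      |L1| ≤ (1 / 2) * (1 - 1 / (K : ℝ)) * M ∧
      |R| ≤ G / (3 * (α₀ + 1)) ∧
      |(∫ ω, ℓ (π ω) ∂μ) - ℓ p| ≤
        ((1 / 2) * (1 - 1 / (K : ℝ)) * M + G / 3) / (α₀ + 1) := by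
  haveI : Nonempty (Fin K) := ⟨⟨0, hK⟩⟩
  have hα0 : 0 < α₀ := hα₀ ▸ Finset.sum_pos (fun i _ => hα i) Finset.univ_nonempty
  have hpS : p ∈ probSimplex K := by
    refine ⟨fun i => ?_, ?_⟩
    · rw [hp]; have := hα i; positivity
    · simp_rw [hp]; rw [← Finset.sum_div, ← hα₀, div_self hα0.ne']
  have hpos : ∀ᵐ ω ∂μ, ∀ i, 0 < W i ω := by
    rw [ae_all_iff]
    intro i
    have h := gamma_ae_pos (α i)
    rw [← hWlaw i] at h
    exact ae_of_ae_map (hWmeas i).aemeasurable h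
  have hπS : ∀ᵐ ω ∂μ, π ω ∈ probSimplex K := by
    filter_upwards [hpos] with ω hω
    have hs : 0 < ∑ k, W k ω := Finset.sum_pos (fun i _ => hω i) Finset.univ_nonempty
    refine ⟨fun i => ?_, ?_⟩
    · rw [hπ]; have := hω i; positivity
    · simp_rw [hπ]; rw [← Finset.sum_div, div_self hs.ne']
  have hπm : Measurable π := by
    have : π = fun ω => WithLp.toLp 2 (fun i => W i ω / ∑ j, W j ω) := by
      funext ω; ext i; simp [hπ]
    rw [this]
    fun_prop
  have hπim : ∀ i, Measurable fun ω => π ω i := fun i => by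
    simp_rw [hπ]; fun_prop
  have hcoord : ∀ q ∈ probSimplex K, ∀ i, q i ≤ 1 := fun q hq i => by
    rw [← hq.2]
    exact Finset.single_le_sum (fun j _ => hq.1 j) (Finset.mem_univ i)
  have hnorm : ∀ q ∈ probSimplex K, ‖q‖ ≤ 1 := fun q hq => by
    rw [← sq_le_one_iff₀ (norm_nonneg _), EuclideanSpace.real_norm_sq_eq, ← hq.2]
    refine Finset.sum_le_sum fun i _ => ?_
    nlinarith [hq.1 i, hcoord q hq i]
  have hint2 : ∀ i j, Integrable (fun ω => π ω i * π ω j) μ := fun i j => by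
    refine Integrable.of_bound (by have := hπim i; have := hπim j; exact Measurable.aestronglyMeasurable (by fun_prop)) 1 ?_
    filter_upwards [hπS] with ω hω
    rw [Real.norm_of_nonneg (mul_nonneg (hω.1 i) (hω.1 j))]
    exact mul_le_one₀ (hcoord _ hω i) (hω.1 j) (hcoord _ hω j)
  have hint1 : ∀ i, Integrable (fun ω => π ω i) μ := fun i => by
    refine Integrable.of_bound (hπim i).aestronglyMeasurable 1 ?_
    filter_upwards [hπS] with ω hω
    rw [Real.norm_of_nonneg (hω.1 i)]
    exact hcoord _ hω i
  have hE2 : ∀ i j, ∫ ω, π ω i * π ω j ∂μ =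
      α i * (α j + if i = j then 1 else 0) / (α₀ * (α₀ + 1)) := fun i j => by
    simp_rw [hπ, hα₀]
    exact dirichlet_second_moment hK μ α hα W hWmeas hWindep hWlaw hpos i j
  have hE1 : ∀ i, ∫ ω, π ω i ∂μ = p i := fun i => by
    have h1 : ∫ ω, π ω i ∂μ = ∫ ω, ∑ j, π ω i * π ω j ∂μ := by
      apply integral_congr_ae
      filter_upwards [hπS] with ω hω
      rw [← Finset.mul_sum, hω.2, mul_one]
    rw [h1, integral_finsetSum _ (fun j _ => hint2 i j)]
    simp_rw [hE2, ← Finset.sum_div, ← Finset.mul_sum, Finset.sum_add_distrib]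
    rw [← hα₀, hp]
    simp
    field_simp
  have hcint : ∀ i j, Integrable (fun ω => (π ω j - p j) * (π ω i - p i)) μ := fun i j => by
    have : (fun ω => (π ω j - p j) * (π ω i - p i)) = fun ω =>
        π ω j * π ω i - p i * π ω j - p j * π ω i + p j * p i := by funext ω; ring
    rw [this]
    exact (((hint2 j i).sub ((hint1 j).const_mul _)).sub ((hint1 i).const_mul _)).add
      (integrable_const _)
  have hcov : ∀ i j, ∫ ω, (π ω j - p j) * (π ω i - p i) ∂μ =
      ((if j = i then p j else 0) - p j * p i) / (α₀ + 1) := fun i j => by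
    have : (fun ω => (π ω j - p j) * (π ω i - p i)) = fun ω =>
        π ω j * π ω i - p i * π ω j - p j * π ω i + p j * p i := by funext ω; ring
    have i1 := hint2 j i
    have i2 : Integrable (fun ω => p i * π ω j) μ := (hint1 j).const_mul _
    have i3 : Integrable (fun ω => p j * π ω i) μ := (hint1 i).const_mul _
    have i4 : Integrable (fun ω => π ω j * π ω i - p i * π ω j) μ := i1.sub i2
    have i5 : Integrable (fun ω => π ω j * π ω i - p i * π ω j - p j * π ω i) μ := i4.sub i3
    rw [this, integral_add i5 (integrable_const _), integral_sub i4 i3, integral_sub i1 i2,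
      integral_const_mul, integral_const_mul, hE1, hE1, hE2, integral_const]
    simp only [probReal_univ, one_smul, hp]
    split_ifs <;> field_simp <;> ring
  have hlin : ∀ ω, ⟪grad p, π ω - p⟫ = ∑ i, grad p i * (π ω i - p i) := fun ω => by
    rw [PiLp.inner_apply]
    exact Finset.sum_congr rfl fun i _ => by simp [mul_comm]
  have hlinI : Integrable (fun ω => ⟪grad p, π ω - p⟫) μ := by
    simp_rw [hlin]
    exact integrable_finsetSum _ fun i _ => ((hint1 i).sub (integrable_const _)).const_mul _
  have hlin0 : ∫ ω, ⟪grad p, π ω - p⟫ ∂μ = 0 := by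
    simp_rw [hlin]
    have i1 : ∀ i, Integrable (fun ω => grad p i * (π ω i - p i)) μ := fun i =>
      ((hint1 i).sub (integrable_const _)).const_mul _
    rw [integral_finsetSum _ fun i _ => i1 i]
    refine Finset.sum_eq_zero fun i _ => ?_
    rw [integral_const_mul, integral_sub (hint1 i) (integrable_const _), hE1]
    simp
  have hquad : ∀ ω, ⟪Hess p (π ω - p), π ω - p⟫ = ∑ i, ∑ j,
      Hess p (EuclideanSpace.single j 1) i * ((π ω j - p j) * (π ω i - p i)) := fun ω => by
    rw [inner_expand]; rfl
  have hquadI : Integrable (fun ω => ⟪Hess p (π ω - p), π ω - p⟫) μ := by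
    simp_rw [hquad]
    exact integrable_finsetSum _ fun i _ => integrable_finsetSum _ fun j _ =>
      (hcint i j).const_mul _
  have hquadE : ∫ ω, 1 / 2 * ⟪Hess p (π ω - p), π ω - p⟫ ∂μ = L1 / (α₀ + 1) := by
    rw [integral_const_mul]
    simp_rw [hquad]
    rw [integral_finsetSum _ fun i _ => integrable_finsetSum _ fun j _ =>
      (hcint i j).const_mul _]
    simp_rw [integral_finsetSum _ fun j _ => (hcint _ j).const_mul _, integral_const_mul, hcov]
    rw [hL1, mul_div_assoc]
    simp_rw [Finset.sum_div, mul_div_assoc]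
  have hnsq : ∀ ω, ‖π ω - p‖ ^ 2 = ∑ i, (π ω i - p i) * (π ω i - p i) := fun ω => by
    rw [EuclideanSpace.real_norm_sq_eq]
    exact Finset.sum_congr rfl fun i _ => by simp [sq]
  have hnsqI : Integrable (fun ω => ‖π ω - p‖ ^ 2) μ := by
    simp_rw [hnsq]
    exact integrable_finsetSum _ fun i _ => hcint i i
  have hnsqE : ∫ ω, ‖π ω - p‖ ^ 2 ∂μ ≤ 1 / (α₀ + 1) := by
    simp_rw [hnsq]
    rw [integral_finsetSum _ fun i _ => hcint i i]
    simp_rw [hcov, ← Finset.sum_div]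
    gcongr
    rw [← hpS.2]
    refine Finset.sum_le_sum fun i _ => ?_
    simp
    exact mul_self_nonneg _
  have hpU := hUsimplex hpS
  set rem : Ω → ℝ := fun ω => ℓ (π ω) - ℓ p - ⟪grad p, π ω - p⟫
    - 1 / 2 * ⟪Hess p (π ω - p), π ω - p⟫ with hrem
  have hremb : ∀ᵐ ω ∂μ, |rem ω| ≤ G / 3 * ‖π ω - p‖ ^ 2 := by
    filter_upwards [hπS] with ω hω
    refine (taylor_bound U hUconv ℓ grad Hess hgrad hhess G hlip p (π ω) hpU
      (hUsimplex hω)).trans ?_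
    have h2 : ‖π ω - p‖ ≤ 2 := by
      have := norm_sub_le (π ω) p
      linarith [hnorm _ hω, hnorm _ hpS]
    calc G / 6 * ‖π ω - p‖ ^ 3 = G / 6 * ‖π ω - p‖ ^ 2 * ‖π ω - p‖ := by ring
      _ ≤ G / 6 * ‖π ω - p‖ ^ 2 * 2 := by gcongr
      _ = _ := by ring
  have hℓm : AEStronglyMeasurable (fun ω => ℓ (π ω)) μ := by
    classical
    have h1 : Measurable (U.piecewise ℓ (fun _ => (0:ℝ))) :=
      ContinuousOn.measurable_piecewise hℓ.continuousOn continuousOn_const hUopen.measurableSet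
    refine (h1.comp hπm).aestronglyMeasurable.congr ?_
    filter_upwards [hπS] with ω hω
    simp [Set.piecewise_eq_of_mem _ _ _ (hUsimplex hω)]
  have hremI : Integrable rem μ := by
    refine Integrable.mono' (hnsqI.const_mul (G / 3)) ?_ hremb
    exact ((hℓm.sub aestronglyMeasurable_const).sub hlinI.aestronglyMeasurable).sub
      (hquadI.const_mul _).aestronglyMeasurable
  have hdec : ∫ ω, ℓ (π ω) ∂μ = ℓ p + L1 / (α₀ + 1) + ∫ ω, rem ω ∂μ := by
    have : (fun ω => ℓ (π ω)) = fun ω => ℓ p + ⟪grad p, π ω - p⟫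
        + 1 / 2 * ⟪Hess p (π ω - p), π ω - p⟫ + rem ω := by
      funext ω; simp only [hrem]; ring
    have i1 : Integrable (fun ω => 1 / 2 * ⟪Hess p (π ω - p), π ω - p⟫) μ := hquadI.const_mul _
    have i2 : Integrable (fun ω => ℓ p + ⟪grad p, π ω - p⟫) μ := (integrable_const _).add hlinI
    have i3 : Integrable (fun ω => ℓ p + ⟪grad p, π ω - p⟫
        + 1 / 2 * ⟪Hess p (π ω - p), π ω - p⟫) μ := i2.add i1
    rw [this, integral_add i3 hremI, integral_add i2 i1,
      integral_add (integrable_const _) hlinI, hlin0, hquadE]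
    simp
  have hRe : R = ∫ ω, rem ω ∂μ := by rw [hR, hdec]; ring
  have hRb : |R| ≤ G / (3 * (α₀ + 1)) := by
    rw [hRe]
    calc |∫ ω, rem ω ∂μ| ≤ ∫ ω, |rem ω| ∂μ := abs_integral_le_integral_abs
      _ ≤ ∫ ω, G / 3 * ‖π ω - p‖ ^ 2 ∂μ :=
        integral_mono_ae hremI.abs (hnsqI.const_mul _) hremb
      _ = G / 3 * ∫ ω, ‖π ω - p‖ ^ 2 ∂μ := integral_const_mul _ _
      _ ≤ G / 3 * (1 / (α₀ + 1)) := by gcongr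
      _ = _ := by field_simp
  have hLb : |L1| ≤ (1 / 2) * (1 - 1 / (K : ℝ)) * M := by
    have := L1_bound (Hess p) M (hbound p hpU) hK p hpS
    rw [hL1, abs_mul, abs_of_pos (by norm_num : (0:ℝ) < 1 / 2)]
    linarith
  refine ⟨by rw [hR]; ring, hLb, hRb, ?_⟩
  have e : (∫ ω, ℓ (π ω) ∂μ) - ℓ p = L1 / (α₀ + 1) + R := by rw [hR]; ring
  rw [e]
  calc |L1 / (α₀ + 1) + R| ≤ |L1 / (α₀ + 1)| + |R| := abs_add_le _ _
    _ = |L1| / (α₀ + 1) + |R| := by rw [abs_div, abs_of_pos (by positivity : 0 < α₀ + 1)]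
    _ ≤ (1 / 2) * (1 - 1 / (K : ℝ)) * M / (α₀ + 1) + G / (3 * (α₀ + 1)) := by gcongr
    _ = _ := by field_simp
end
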